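/- arXiv:1505.00617 — 4 statements merged into one kernel-verified Lean document; each statement's English description precedes it below -/
import Mathlib

section
/- Let I ⊆ ℝ be a nondegenerate interval, n ∈ ℕ, let ω = (ω_1,…,ω_n) be an n-dimensional positive Chebyshev system over I, and let ω_{n+1} : I → ℝ be such that ω* = (ω_1,…,ω_n,ω_{n+1}) is an (n+1)-dimensional positive Chebyshev system over I. Then a function f : I → ℝ is ω-convex on I if and only if D̲_{ω*} f(p) ≥ 0 for all p ∈ I. -/
/-- `Phi ω x` is the determinant `det(ωᵢ(xⱼ))` of an `n`-tuple of functions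
evaluated at an `n`-tuple of points. -/
noncomputable def Phi {n : ℕ} (ω : Fin n → ℝ → ℝ) (x : Fin n → ℝ) : ℝ :=
  (Matrix.of fun i j => ω i (x j)).det

/-- `ω` is an `n`-dimensional positive Chebyshev system over `H`:
`Phi ω` is positive on all strictly increasing `n`-tuples of elements of `H`. -/
def IsPosChebyshev {n : ℕ} (ω : Fin n → ℝ → ℝ) (H : Set ℝ) : Prop :=
  ∀ x : Fin n → ℝ, StrictMono x → (∀ j, x j ∈ H) → 0 < Phi ω x

/-- The generalized `ω*`-divided difference `[x₀,…,xₙ; f]_{ω*}`, where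
`ω* = (ω₁,…,ωₙ,ω')`:  `Φ_{(ω,f)}(x) / Φ_{ω*}(x)`. -/
noncomputable def divDiff {n : ℕ} (ω : Fin n → ℝ → ℝ) (ω' : ℝ → ℝ) (f : ℝ → ℝ)
    (x : Fin (n + 1) → ℝ) : ℝ :=
  Phi (Fin.snoc ω f) x / Phi (Fin.snoc ω ω') x

/-- `f` is `ω`-convex on `S`: `Φ_{(ω,f)}(x₀,…,xₙ) ≥ 0` for every strictly
increasing `(n+1)`-tuple of elements of `S`. -/
def OmegaConvexOn {n : ℕ} (ω : Fin n → ℝ → ℝ) (S : Set ℝ) (f : ℝ → ℝ) : Prop :=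
  ∀ x : Fin (n + 1) → ℝ, StrictMono x → (∀ j, x j ∈ S) → 0 ≤ Phi (Fin.snoc ω f) x

/-- The lower Dinghas type derivative `D̲_{ω*} f(p)`: the limit, as `δ → 0⁺`, of the
infimum of the divided differences `[x₀,…,xₙ; f]_{ω*}` over strictly increasing
tuples in `I` with `x₀ ≤ p ≤ xₙ` and `xₙ − x₀ < δ`; realized as a `liminf`
(with values in `EReal`) along the filter `⨅ δ > 0, 𝓟 {tuples with xₙ − x₀ < δ}`. -/
noncomputable def dinghas {n : ℕ} (ω : Fin n → ℝ → ℝ) (ω' : ℝ → ℝ) (f : ℝ → ℝ)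
    (I : Set ℝ) (p : ℝ) : EReal :=
  Filter.liminf (fun x : Fin (n + 1) → ℝ => (divDiff ω ω' f x : EReal))
    (⨅ δ ∈ Set.Ioi (0 : ℝ), Filter.principal
      {x : Fin (n + 1) → ℝ | StrictMono x ∧ (∀ j, x j ∈ I) ∧
        x 0 ≤ p ∧ p ≤ x (Fin.last n) ∧ x (Fin.last n) - x 0 < δ})

/-!
The point is a mean value inequality: every divided difference `[x₀,…,xₙ; f]` is at least
`D̲f(p)` for some `p ∈ [x₀, xₙ]`. If `z` has `n + 2` points, then the divided difference of `z`
with an interior point removed is a weighted mean, with positive weights, of the two obtained by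
removing an endpoint. So inserting a point into a gap of `x` and dropping a suitable endpoint never
increases the divided difference but shrinks the tuple. Among the tuples drawn from a finite, fine
enough subset of `[x₀, xₙ]`, one of least diameter with divided difference at most
`[x₀,…,xₙ; f]` therefore has no long gaps. Iterating gives nested intervals shrinking to `p`.
-/

open Filter Set

/-- An element of `σₙ(H)`: a strictly increasing `n`-tuple of elements of `H`. -/
structure IsIncreasingTuple {α : Type*} [Preorder α] {n : ℕ} (H : Set α) (x : Fin n → α) :
    Prop where
  strictMono : StrictMono x
  mem : ∀ j, x j ∈ H

namespace IsIncreasingTuple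

variable {α : Type*} [Preorder α] {n : ℕ} {H K : Set α}

theorem mono (hHK : H ⊆ K) {x : Fin n → α} (hx : IsIncreasingTuple H x) :
    IsIncreasingTuple K x :=
  ⟨hx.strictMono, fun j => hHK (hx.mem j)⟩

theorem comp {m : ℕ} {x : Fin n → α} (hx : IsIncreasingTuple H x) {e : Fin m → Fin n}
    (he : StrictMono e) : IsIncreasingTuple H (x ∘ e) :=
  ⟨hx.strictMono.comp he, fun j => hx.mem (e j)⟩

theorem removeNth {x : Fin (n + 1) → α} (hx : IsIncreasingTuple H x) (k : Fin (n + 1)) :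
    IsIncreasingTuple H (k.removeNth x) :=
  hx.comp (Fin.strictMono_succAbove k)

theorem tail {x : Fin (n + 1) → α} (hx : IsIncreasingTuple H x) :
    IsIncreasingTuple H (Fin.tail x) :=
  hx.comp Fin.strictMono_succ

theorem init {x : Fin (n + 1) → α} (hx : IsIncreasingTuple H x) :
    IsIncreasingTuple H (Fin.init x) :=
  hx.comp Fin.strictMono_castSucc

theorem insertNth {x : Fin (n + 1) → α} (hx : IsIncreasingTuple H x) (i : Fin n) {m : α}
    (hm : m ∈ H) (him : x i.castSucc < m) (hmi : m < x i.succ) :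
    IsIncreasingTuple H (i.castSucc.succ.insertNth m x : Fin (n + 2) → α) where
  strictMono := Fin.strictMono_insertNth hx.strictMono i m him hmi
  mem := Fin.forall_iff_succAbove i.castSucc.succ |>.mpr ⟨by simpa, by simpa using hx.mem⟩

theorem first_le_last {x : Fin (n + 1) → α} (hx : IsIncreasingTuple H x) :
    x 0 ≤ x (Fin.last n) :=
  hx.strictMono.monotone (Fin.zero_le _)

theorem mem_Icc {x : Fin (n + 1) → α} (hx : IsIncreasingTuple H x) (j : Fin (n + 1)) :
    x j ∈ Icc (x 0) (x (Fin.last n)) :=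
  ⟨hx.strictMono.monotone (Fin.zero_le j), hx.strictMono.monotone (Fin.le_last j)⟩

end IsIncreasingTuple

theorem removeNth_zero_of_ne {α : Type*} {n : ℕ} {k : Fin (n + 2)} (hk : k ≠ 0)
    (z : Fin (n + 2) → α) : k.removeNth z 0 = z 0 := by
  rw [Fin.removeNth_apply, Fin.succAbove_ne_zero_zero hk]

theorem removeNth_last_of_ne {α : Type*} {n : ℕ} {k : Fin (n + 2)} (hk : k ≠ Fin.last (n + 1))
    (z : Fin (n + 2) → α) : k.removeNth z (Fin.last n) = z (Fin.last (n + 1)) := by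
  rw [Fin.removeNth_apply, Fin.succAbove_ne_last_last hk]

section Determinants

variable {n : ℕ}

theorem Phi_snoc (ω : Fin n → ℝ → ℝ) (g : ℝ → ℝ) (x : Fin (n + 1) → ℝ) :
    Phi (Fin.snoc ω g) x =
      ∑ j : Fin (n + 1), (-1) ^ (n + (j : ℕ)) * g (x j) * Phi ω (j.removeNth x) := by
  have hminor (j : Fin (n + 1)) :
      (Matrix.of fun i k => (Fin.snoc ω g : Fin (n + 1) → ℝ → ℝ) i (x k)).submatrix
        Fin.castSucc j.succAbove = Matrix.of fun i k => ω i (j.removeNth x k) := by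
    ext i k
    simp [Fin.removeNth_apply]
  simp [Phi, Matrix.det_succ_row _ (Fin.last n), hminor]

theorem Phi_snoc_sub_sum (ω : Fin n → ℝ → ℝ) (g : ℝ → ℝ) (a : Fin n → ℝ)
    (x : Fin (n + 1) → ℝ) :
    Phi (Fin.snoc ω (g - ∑ l, a l • ω l)) x = Phi (Fin.snoc ω g) x := by
  set A : Matrix (Fin (n + 1)) (Fin (n + 1)) ℝ :=
    Matrix.of fun i j => (Fin.snoc ω g : Fin (n + 1) → ℝ → ℝ) i (x j) with hA
  have hrow := Matrix.det_updateRow_sum A (Fin.last n) (Fin.snoc (-a) 1)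
  rw [Fin.snoc_last, one_smul] at hrow
  rw [Phi, Phi, ← hA, ← hrow]
  congr 1
  ext i j
  refine Fin.lastCases ?_ (fun i => ?_) i
  · simp [hA, Fin.sum_univ_castSucc, sub_eq_neg_add]
  · simp [hA, Matrix.updateRow_apply]

theorem exists_forall_sum_mul_eq {ω : Fin n → ℝ → ℝ} {x : Fin n → ℝ} (hx : Phi ω x ≠ 0)
    (b : Fin n → ℝ) : ∃ a : Fin n → ℝ, ∀ j, ∑ l, a l * ω l (x j) = b j := by
  have hunit : IsUnit (Matrix.of fun i j => ω i (x j)) :=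
    (Matrix.isUnit_iff_isUnit_det _).mpr (isUnit_iff_ne_zero.mpr hx)
  obtain ⟨a, ha⟩ := Matrix.vecMul_surjective_iff_isUnit.mpr hunit b
  exact ⟨a, fun j => congrFun ha j⟩

theorem Phi_snoc_of_eq_zero (hn : n ≠ 0) (ω : Fin n → ℝ → ℝ) {h : ℝ → ℝ}
    {x : Fin (n + 1) → ℝ} (hzero : ∀ j, j ≠ 0 → j ≠ Fin.last n → h (x j) = 0) :
    Phi (Fin.snoc ω h) x =
      (-1) ^ n * h (x 0) * Phi ω (Fin.tail x) + h (x (Fin.last n)) * Phi ω (Fin.init x) := by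
  have hne : (0 : Fin (n + 1)) ≠ Fin.last n := by simpa [Fin.ext_iff] using hn.symm
  rw [Phi_snoc, Fintype.sum_eq_add 0 (Fin.last n) hne]
  · simp [Even.neg_one_pow ⟨n, rfl⟩]
  · rintro j ⟨hj0, hjl⟩
    rw [hzero j hj0 hjl, mul_zero, zero_mul]

theorem Phi_snoc_removeNth_mul_of_eq_zero (ω : Fin n → ℝ → ℝ) {h : ℝ → ℝ} {z : Fin (n + 2) → ℝ}
    {k : Fin (n + 2)} (hk0 : k ≠ 0) (hkl : k ≠ Fin.last (n + 1))
    (hzero : ∀ i, i ≠ 0 → i ≠ Fin.last (n + 1) → h (z i) = 0) :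
    Phi (Fin.snoc ω h) (k.removeNth z) * Phi ω (Fin.tail (Fin.init z)) =
      Phi (Fin.snoc ω h) (Fin.init z) * Phi ω (Fin.tail (k.removeNth z)) +
        Phi (Fin.snoc ω h) (Fin.tail z) * Phi ω (Fin.init (k.removeNth z)) := by
  have hn : n ≠ 0 := by
    rintro rfl
    simp only [ne_eq, Fin.ext_iff, Fin.val_zero, Fin.val_last] at hk0 hkl
    omega
  have hremove : Phi (Fin.snoc ω h) (k.removeNth z) =
      (-1) ^ n * h (z 0) * Phi ω (Fin.tail (k.removeNth z)) +
        h (z (Fin.last (n + 1))) * Phi ω (Fin.init (k.removeNth z)) := by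
    rw [Phi_snoc_of_eq_zero hn, removeNth_zero_of_ne hk0, removeNth_last_of_ne hkl]
    exact fun j hj0 hjl =>
      hzero _ (Fin.succAbove_ne_zero hk0 hj0) (Fin.succAbove_ne_last hkl hjl)
  have hinit : Phi (Fin.snoc ω h) (Fin.init z) =
      (-1) ^ n * h (z 0) * Phi ω (Fin.tail (Fin.init z)) := by
    have hvanish (j : Fin (n + 1)) (hj : j ≠ 0) : h (Fin.init z j) = 0 :=
      hzero _ (Fin.castSucc_ne_zero_iff.mpr hj) (Fin.castSucc_ne_last j)
    rw [Phi_snoc_of_eq_zero hn ω fun j hj _ => hvanish j hj,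
      hvanish (Fin.last n) (by simpa [Fin.ext_iff] using hn)]
    simp [Fin.init]
  have htail : Phi (Fin.snoc ω h) (Fin.tail z) =
      h (z (Fin.last (n + 1))) * Phi ω (Fin.tail (Fin.init z)) := by
    have hvanish (j : Fin (n + 1)) (hj : j ≠ Fin.last n) : h (Fin.tail z j) = 0 :=
      hzero _ (Fin.succ_ne_zero j) (by simpa [Fin.ext_iff] using hj)
    rw [Phi_snoc_of_eq_zero hn ω fun j _ hj => hvanish j hj,
      hvanish 0 (by simpa [Fin.ext_iff] using hn.symm), Fin.tail_init_eq_init_tail]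
    simp [Fin.tail]
  rw [hremove, hinit, htail]
  ring

/-- A three-term Plücker relation. Each term is unchanged when a combination of `ω₁, …, ωₙ` is
subtracted from `g`, so `g` may be taken to vanish at all points of `z` but the endpoints. -/
theorem Phi_snoc_removeNth_mul {ω : Fin n → ℝ → ℝ} (g : ℝ → ℝ) {z : Fin (n + 2) → ℝ}
    {k : Fin (n + 2)} (hk0 : k ≠ 0) (hkl : k ≠ Fin.last (n + 1))
    (hz : Phi ω (Fin.tail (Fin.init z)) ≠ 0) :
    Phi (Fin.snoc ω g) (k.removeNth z) * Phi ω (Fin.tail (Fin.init z)) =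
      Phi (Fin.snoc ω g) (Fin.init z) * Phi ω (Fin.tail (k.removeNth z)) +
        Phi (Fin.snoc ω g) (Fin.tail z) * Phi ω (Fin.init (k.removeNth z)) := by
  obtain ⟨a, ha⟩ := exists_forall_sum_mul_eq hz fun j => g (Fin.tail (Fin.init z) j)
  simp only [← Phi_snoc_sub_sum ω g a]
  refine Phi_snoc_removeNth_mul_of_eq_zero ω hk0 hkl fun i hi0 hil => ?_
  obtain ⟨i, rfl⟩ := Fin.exists_castSucc_eq.mpr hil
  obtain ⟨i, rfl⟩ := Fin.exists_succ_eq.mpr (Fin.castSucc_ne_zero_iff.mp hi0)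
  simpa [sub_eq_zero, Fin.tail, Fin.init] using (ha i).symm

end Determinants

section DividedDifferences

variable {n : ℕ} {I : Set ℝ} {ω : Fin n → ℝ → ℝ} {ω' : ℝ → ℝ}

theorem IsPosChebyshev.Phi_pos (hω : IsPosChebyshev ω I) {x : Fin n → ℝ}
    (hx : IsIncreasingTuple I x) : 0 < Phi ω x :=
  hω x hx.strictMono hx.mem

theorem IsPosChebyshev.mono {J : Set ℝ} (hω : IsPosChebyshev ω I) (hJI : J ⊆ I) :
    IsPosChebyshev ω J :=
  fun x hx hxJ => hω x hx fun j => hJI (hxJ j)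

theorem divDiff_nonneg_iff (hωs : IsPosChebyshev (Fin.snoc ω ω') I) (f : ℝ → ℝ)
    {x : Fin (n + 1) → ℝ} (hx : IsIncreasingTuple I x) :
    0 ≤ divDiff ω ω' f x ↔ 0 ≤ Phi (Fin.snoc ω f) x :=
  le_div_iff₀ (hωs.Phi_pos hx) |>.trans (by rw [zero_mul])

theorem min_divDiff_le_divDiff_removeNth (hω : IsPosChebyshev ω I)
    (hωs : IsPosChebyshev (Fin.snoc ω ω') I) (f : ℝ → ℝ) {z : Fin (n + 2) → ℝ}
    (hz : IsIncreasingTuple I z) {k : Fin (n + 2)} (hk0 : k ≠ 0) (hkl : k ≠ Fin.last (n + 1)) :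
    min (divDiff ω ω' f (Fin.init z)) (divDiff ω ω' f (Fin.tail z)) ≤
      divDiff ω ω' f (k.removeNth z) := by
  set c := min (divDiff ω ω' f (Fin.init z)) (divDiff ω ω' f (Fin.tail z))
  have hinit : c * Phi (Fin.snoc ω ω') (Fin.init z) ≤ Phi (Fin.snoc ω f) (Fin.init z) :=
    (le_div_iff₀ (hωs.Phi_pos hz.init)).mp (min_le_left _ _)
  have htail : c * Phi (Fin.snoc ω ω') (Fin.tail z) ≤ Phi (Fin.snoc ω f) (Fin.tail z) :=
    (le_div_iff₀ (hωs.Phi_pos hz.tail)).mp (min_le_right _ _)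
  have hP := hω.Phi_pos hz.init.tail
  have hA := hω.Phi_pos (hz.removeNth k).tail
  have hB := hω.Phi_pos (hz.removeNth k).init
  rw [divDiff, le_div_iff₀ (hωs.Phi_pos (hz.removeNth k))]
  refine le_of_mul_le_mul_right ?_ hP
  calc c * Phi (Fin.snoc ω ω') (k.removeNth z) * Phi ω (Fin.tail (Fin.init z))
      = c * Phi (Fin.snoc ω ω') (Fin.init z) * Phi ω (Fin.tail (k.removeNth z)) +
          c * Phi (Fin.snoc ω ω') (Fin.tail z) * Phi ω (Fin.init (k.removeNth z)) := by
        rw [mul_assoc, Phi_snoc_removeNth_mul ω' hk0 hkl hP.ne']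
        ring
    _ ≤ Phi (Fin.snoc ω f) (Fin.init z) * Phi ω (Fin.tail (k.removeNth z)) +
          Phi (Fin.snoc ω f) (Fin.tail z) * Phi ω (Fin.init (k.removeNth z)) := by
        gcongr
    _ = Phi (Fin.snoc ω f) (k.removeNth z) * Phi ω (Fin.tail (Fin.init z)) :=
        (Phi_snoc_removeNth_mul f hk0 hkl hP.ne').symm

end DividedDifferences

section Refinement

theorem exists_lt_succ_sub_castSucc {n : ℕ} {x : Fin (n + 1) → ℝ} {h : ℝ}
    (hx : n * h < x (Fin.last n) - x 0) : ∃ i : Fin n, h < x i.succ - x i.castSucc := by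
  by_contra! hgap
  have hdist (j : Fin (n + 1)) : x j - x 0 ≤ (j : ℕ) * h := by
    induction j using Fin.induction with
    | zero => simp
    | succ i ih =>
      have := hgap i
      simp only [Fin.val_castSucc, Fin.val_succ, Nat.cast_add, Nat.cast_one] at ih ⊢
      linarith
  exact hx.not_ge (hdist (Fin.last n))

theorem exists_finite_subset_Icc_forall_exists_mem_Ioo (a b : ℝ) {h : ℝ} (hh : 0 < h) :
    ∃ S ⊆ Icc a b, S.Finite ∧
      ∀ u ∈ Icc a b, ∀ v ∈ Icc a b, h < v - u → ∃ m ∈ S, m ∈ Ioo u v := by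
  obtain ⟨S, hS, hfin, hcover⟩ := (isCompact_Icc (a := a) (b := b)).finite_cover_balls (half_pos hh)
  refine ⟨S, hS, hfin, fun u hu v hv huv => ?_⟩
  have hmid : (u + v) / 2 ∈ Icc a b :=
    ⟨by linarith [hu.1, hv.1], by linarith [hu.2, hv.2]⟩
  obtain ⟨m, hmS, hm⟩ := mem_iUnion₂.mp (hcover hmid)
  rw [Metric.mem_ball, Real.dist_eq, abs_lt] at hm
  exact ⟨m, hmS, by linarith, by linarith⟩

variable {n : ℕ} {I : Set ℝ} {ω : Fin n → ℝ → ℝ} {ω' : ℝ → ℝ}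

theorem exists_divDiff_le_and_sub_lt_of_mem_Ioo (hω : IsPosChebyshev ω I)
    (hωs : IsPosChebyshev (Fin.snoc ω ω') I) (f : ℝ → ℝ) {x : Fin (n + 1) → ℝ}
    (hx : IsIncreasingTuple I x) {i : Fin n} {m : ℝ} (hmI : m ∈ I)
    (hm : m ∈ Ioo (x i.castSucc) (x i.succ)) :
    ∃ y : Fin (n + 1) → ℝ, IsIncreasingTuple I y ∧
      y (Fin.last n) - y 0 < x (Fin.last n) - x 0 ∧ divDiff ω ω' f y ≤ divDiff ω ω' f x := by
  set k : Fin (n + 2) := i.castSucc.succ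
  set z : Fin (n + 2) → ℝ := k.insertNth m x
  have hz : IsIncreasingTuple I z := hx.insertNth i hmI hm.1 hm.2
  have hk0 : k ≠ 0 := Fin.succ_ne_zero _
  have hkl : k ≠ Fin.last (n + 1) := Fin.castSucc_ne_last i.succ
  have hzx : k.removeNth z = x := Fin.removeNth_insertNth (α := fun _ => ℝ) k m x
  have hfirst : z 0 = x 0 := by rw [← hzx, removeNth_zero_of_ne hk0]
  have hlast : z (Fin.last (n + 1)) = x (Fin.last n) := by
    rw [← hzx, removeNth_last_of_ne hkl]
  rcases min_le_iff.mp (min_divDiff_le_divDiff_removeNth hω hωs f hz hk0 hkl) with hle | hle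
  · refine ⟨Fin.init z, hz.init, ?_, hzx ▸ hle⟩
    have := hz.strictMono (Fin.castSucc_lt_last (Fin.last n))
    simp only [Fin.init, Fin.castSucc_zero]
    linarith
  · refine ⟨Fin.tail z, hz.tail, ?_, hzx ▸ hle⟩
    have := hz.strictMono (Fin.succ_pos (0 : Fin (n + 1)))
    simp only [Fin.tail, Fin.succ_last]
    linarith

theorem exists_divDiff_le_and_sub_le_of_finite {S : Set ℝ} (hS : S.Finite) (hω : IsPosChebyshev ω S)
    (hωs : IsPosChebyshev (Fin.snoc ω ω') S) (f : ℝ → ℝ) {h : ℝ}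
    (hdense : ∀ u ∈ S, ∀ v ∈ S, h < v - u → ∃ m ∈ S, m ∈ Ioo u v)
    {x : Fin (n + 1) → ℝ} (hx : IsIncreasingTuple S x) :
    ∃ y : Fin (n + 1) → ℝ, IsIncreasingTuple S y ∧ y (Fin.last n) - y 0 ≤ n * h ∧
      divDiff ω ω' f y ≤ divDiff ω ω' f x := by
  set T := {y : Fin (n + 1) → ℝ | IsIncreasingTuple S y ∧ divDiff ω ω' f y ≤ divDiff ω ω' f x}
  have hT : T.Finite := (Finite.pi' fun _ => hS).subset fun y hy => hy.1.mem
  obtain ⟨y, ⟨hyS, hyx⟩, hmin⟩ :=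
    T.exists_min_image (fun y => y (Fin.last n) - y 0) hT ⟨x, hx, le_rfl⟩
  refine ⟨y, hyS, not_lt.mp fun hlarge => ?_, hyx⟩
  obtain ⟨i, hi⟩ := exists_lt_succ_sub_castSucc hlarge
  obtain ⟨m, hmS, hm⟩ := hdense _ (hyS.mem i.castSucc) _ (hyS.mem i.succ) hi
  obtain ⟨w, hwS, hwy, hle⟩ := exists_divDiff_le_and_sub_lt_of_mem_Ioo hω hωs f hyS hmS hm
  exact hwy.not_ge (hmin w ⟨hwS, hle.trans hyx⟩)

theorem exists_divDiff_le_and_sub_lt (hI : I.OrdConnected) (hω : IsPosChebyshev ω I)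
    (hωs : IsPosChebyshev (Fin.snoc ω ω') I) (f : ℝ → ℝ) {x : Fin (n + 1) → ℝ}
    (hx : IsIncreasingTuple I x) {δ : ℝ} (hδ : 0 < δ) :
    ∃ y : Fin (n + 1) → ℝ, IsIncreasingTuple I y ∧
      Icc (y 0) (y (Fin.last n)) ⊆ Icc (x 0) (x (Fin.last n)) ∧
      y (Fin.last n) - y 0 < δ ∧ divDiff ω ω' f y ≤ divDiff ω ω' f x := by
  obtain ⟨h, hh, hnh⟩ := exists_pos_mul_lt hδ (n : ℝ)
  obtain ⟨N, hNx, hNfin, hN⟩ :=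
    exists_finite_subset_Icc_forall_exists_mem_Ioo (x 0) (x (Fin.last n)) hh
  have hSx : N ∪ range x ⊆ Icc (x 0) (x (Fin.last n)) :=
    union_subset hNx (range_subset_iff.mpr hx.mem_Icc)
  have hSI : N ∪ range x ⊆ I := hSx.trans (hI.out (hx.mem 0) (hx.mem (Fin.last n)))
  have hdense : ∀ u ∈ N ∪ range x, ∀ v ∈ N ∪ range x, h < v - u →
      ∃ m ∈ N ∪ range x, m ∈ Ioo u v := fun u hu v hv huv =>
    let ⟨m, hmN, hm⟩ := hN u (hSx hu) v (hSx hv) huv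
    ⟨m, Or.inl hmN, hm⟩
  obtain ⟨y, hy, hdiam, hle⟩ := exists_divDiff_le_and_sub_le_of_finite
    (hNfin.union (finite_range x)) (hω.mono hSI) (hωs.mono hSI) f hdense
    ⟨hx.strictMono, fun j => Or.inr (mem_range_self j)⟩
  exact ⟨y, hy.mono hSI, Icc_subset_Icc (hSx (hy.mem 0)).1 (hSx (hy.mem (Fin.last n))).2,
    hdiam.trans_lt hnh, hle⟩

end Refinement

theorem exists_forall_pos_exists_mem_Icc {X : Type*} {l u : X → ℝ} (hlu : ∀ y, l y ≤ u y)
    (hshrink : ∀ y, ∀ δ > 0, ∃ w, Icc (l w) (u w) ⊆ Icc (l y) (u y) ∧ u w - l w < δ) (x : X) :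
    ∃ p ∈ Icc (l x) (u x), ∀ δ > 0, ∃ y, p ∈ Icc (l y) (u y) ∧ u y - l y < δ := by
  choose next hsub hlt using fun (k : ℕ) (y : X) => hshrink y (1 / (k + 1)) Nat.one_div_pos_of_nat
  let s : ℕ → X := fun k => Nat.rec x next k
  have hanti : Antitone fun k => Icc (l (s k)) (u (s k)) :=
    antitone_nat_of_succ_le fun k => hsub k (s k)
  have hp := mem_iInter.mp (ciSup_mem_iInter_Icc_of_antitone_Icc hanti fun k => hlu (s k))
  refine ⟨⨆ k, l (s k), hp 0, fun δ hδ => ?_⟩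
  obtain ⟨k, hk⟩ := exists_nat_one_div_lt hδ
  exact ⟨s (k + 1), hp (k + 1), (hlt k (s k)).trans hk⟩

section Dinghas

variable {n : ℕ} {I : Set ℝ} {ω : Fin n → ℝ → ℝ} {ω' : ℝ → ℝ}

/-- The increasing tuples `(x₀, …, xₙ)` in `I` with `x₀ ≤ p ≤ xₙ` and `xₙ - x₀ < δ`, over which
the Dinghas type derivative at `p` takes its infima; spelled exactly as inside `dinghas`, so that
the two agree definitionally. -/
def straddlingTuples (n : ℕ) (I : Set ℝ) (p δ : ℝ) : Set (Fin (n + 1) → ℝ) :=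
  {x | StrictMono x ∧ (∀ j, x j ∈ I) ∧ x 0 ≤ p ∧ p ≤ x (Fin.last n) ∧ x (Fin.last n) - x 0 < δ}

theorem straddlingTuples_mono (n : ℕ) (I : Set ℝ) (p : ℝ) : Monotone (straddlingTuples n I p) :=
  fun _ _ hδ _ ⟨hx, hxI, h0, hl, hlt⟩ => ⟨hx, hxI, h0, hl, hlt.trans_le hδ⟩

theorem hasBasis_straddlingTuples (n : ℕ) (I : Set ℝ) (p : ℝ) :
    (⨅ δ ∈ Ioi (0 : ℝ), 𝓟 (straddlingTuples n I p δ)).HasBasis (0 < ·)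
      (straddlingTuples n I p) :=
  hasBasis_biInf_principal'
    (fun δ hδ ε hε => ⟨min δ ε, mem_Ioi.mpr (lt_min hδ hε),
      straddlingTuples_mono n I p (min_le_left δ ε),
      straddlingTuples_mono n I p (min_le_right δ ε)⟩) ⟨1, mem_Ioi.mpr one_pos⟩

theorem le_dinghas {f : ℝ → ℝ} {p : ℝ} {c : EReal}
    (hc : ∀ x, IsIncreasingTuple I x → c ≤ divDiff ω ω' f x) : c ≤ dinghas ω ω' f I p :=
  le_liminf_of_le (by isBoundedDefault) <|
    (hasBasis_straddlingTuples n I p).eventually_iff.mpr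
      ⟨1, one_pos, fun x hx => hc x ⟨hx.1, hx.2.1⟩⟩

theorem dinghas_le {f : ℝ → ℝ} {p : ℝ} {c : EReal}
    (hc : ∀ δ > 0, ∃ x ∈ straddlingTuples n I p δ, divDiff ω ω' f x ≤ c) :
    dinghas ω ω' f I p ≤ c :=
  liminf_le_of_frequently_le' <|
    (hasBasis_straddlingTuples n I p).frequently_iff.mpr fun {δ} hδ => hc δ hδ

theorem exists_dinghas_le_divDiff (hI : I.OrdConnected) (hω : IsPosChebyshev ω I)
    (hωs : IsPosChebyshev (Fin.snoc ω ω') I) (f : ℝ → ℝ) {x : Fin (n + 1) → ℝ}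
    (hx : IsIncreasingTuple I x) :
    ∃ p ∈ Icc (x 0) (x (Fin.last n)), dinghas ω ω' f I p ≤ divDiff ω ω' f x := by
  let X := {y : Fin (n + 1) → ℝ // IsIncreasingTuple I y ∧ divDiff ω ω' f y ≤ divDiff ω ω' f x}
  obtain ⟨p, hp, hsmall⟩ := exists_forall_pos_exists_mem_Icc
    (l := fun y : X => y.1 0) (u := fun y : X => y.1 (Fin.last n))
    (fun y => y.2.1.first_le_last)
    (fun y δ hδ =>
      let ⟨w, hw, hsub, hlt, hle⟩ := exists_divDiff_le_and_sub_lt hI hω hωs f y.2.1 hδ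
      ⟨⟨w, hw, hle.trans y.2.2⟩, hsub, hlt⟩)
    ⟨x, hx, le_rfl⟩
  refine ⟨p, hp, dinghas_le fun δ hδ => ?_⟩
  obtain ⟨⟨y, hy, hle⟩, hpy, hlt⟩ := hsmall δ hδ
  exact ⟨y, ⟨hy.strictMono, hy.mem, hpy.1, hpy.2, hlt⟩, EReal.coe_le_coe_iff.mpr hle⟩

end Dinghas

/-- **Corollary 6.** `f` is `ω`-convex on `I` if and only if its lower Dinghas type
derivative `D̲_{ω*} f(p)` is nonnegative at every point `p ∈ I`. -/
theorem omegaConvexOn_iff_dinghas_nonneg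
    (n : ℕ) (hn : 0 < n) (I : Set ℝ) (hI : I.OrdConnected)
    (hne : ∃ a ∈ I, ∃ b ∈ I, a < b)
    (ω : Fin n → ℝ → ℝ) (ω' : ℝ → ℝ)
    (hω : IsPosChebyshev ω I) (hωs : IsPosChebyshev (Fin.snoc ω ω') I)
    (f : ℝ → ℝ) :
    OmegaConvexOn ω I f ↔ ∀ p ∈ I, 0 ≤ dinghas ω ω' f I p := by
  constructor
  · intro hf p _
    refine le_dinghas fun x hx => ?_
    exact_mod_cast (divDiff_nonneg_iff hωs f hx).mpr (hf x hx.strictMono hx.mem)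
  · intro hD x hx hxI
    have hxT : IsIncreasingTuple I x := ⟨hx, hxI⟩
    obtain ⟨p, hp, hle⟩ := exists_dinghas_le_divDiff hI hω hωs f hxT
    have hpI : p ∈ I := hI.out (hxI 0) (hxI (Fin.last n)) hp
    exact (divDiff_nonneg_iff hωs f hxT).mp (by exact_mod_cast (hD p hpI).trans hle)
end

section
/- Let I ⊆ ℝ be a nondegenerate interval, n ∈ ℕ, and let ω be an n-dimensional positive Chebyshev system over I. A function f : I → ℝ is ω-convex on I if and only if, for every p ∈ I, there exists a neighborhood U of p such that f is ω-convex on U ∩ I; that is, ω-convexity is a localizable property. -/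
/-!
Subtracting from `f` a combination of the `ωᵢ` does not change `Φ_{(ω,f)}`, so `f` may be assumed
to vanish at `n` prescribed points. Applied to the interior points of an increasing
`(n + 2)`-tuple, this shows that if deleting the first and deleting the last point both give a
nonnegative `Φ_{(ω,f)}`, then so does deleting any interior point. Hence, in a finite set, a tuple
of minimal span among those with `Φ_{(ω,f)} < 0` consists of consecutive points: a point skipped
by the tuple could be inserted, and dropping one end would then give a tuple of smaller span with
`Φ_{(ω,f)} < 0`. In a finite set that is sufficiently dense in a compact interval, any `n + 1`
consecutive points lie within a Lebesgue number of the cover by the given neighborhoods, where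
`Φ_{(ω,f)} ≥ 0`.
-/

open Set

section Tuples

lemma sub_le_nsmul_of_succ_sub_castSucc_le {α : Type*} [AddCommGroup α] [PartialOrder α]
    [IsOrderedAddMonoid α] {n : ℕ} {x : Fin (n + 1) → α} {h : α}
    (hx : ∀ j : Fin n, x j.succ - x j.castSucc ≤ h) : x (Fin.last n) - x 0 ≤ n • h := by
  induction n with
  | zero => simp
  | succ n ih =>
    have hinit : x (Fin.last n).castSucc - x 0 ≤ n • h :=
      ih (x := Fin.init x) fun j => hx j.castSucc
    calc x (Fin.last (n + 1)) - x 0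
        = (x (Fin.last n).castSucc - x 0) + (x (Fin.last n).succ - x (Fin.last n).castSucc) := by
          rw [Fin.succ_last]; abel
      _ ≤ n • h + h := add_le_add hinit (hx _)
      _ = (n + 1) • h := (succ_nsmul h n).symm

lemma exists_finite_subset_Icc_inter_Ioo_nonempty (a b : ℝ) {h : ℝ} (hh : 0 < h) :
    ∃ G ⊆ Icc a b, G.Finite ∧
      ∀ u ∈ Icc a b, ∀ v ∈ Icc a b, h < v - u → (G ∩ Ioo u v).Nonempty := by
  obtain ⟨G, hGI, hGfin, hcover⟩ :=
    (isCompact_Icc (a := a) (b := b)).finite_cover_balls (half_pos hh)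
  refine ⟨G, hGI, hGfin, fun u hu v hv huv => ?_⟩
  have hmid : (u + v) / 2 ∈ Icc a b := ⟨by linarith [hu.1, hv.1], by linarith [hu.2, hv.2]⟩
  obtain ⟨g, hgG, hg⟩ := mem_iUnion₂.1 (hcover hmid)
  rw [Metric.mem_ball, Real.dist_eq, abs_lt] at hg
  exact ⟨g, hgG, by linarith [hg.2], by linarith [hg.1]⟩

end Tuples

section Determinant

variable {n : ℕ} {ω : Fin n → ℝ → ℝ} {f : ℝ → ℝ}

lemma Phi_snoc_eq_sum (ω : Fin n → ℝ → ℝ) (f : ℝ → ℝ) (x : Fin (n + 1) → ℝ) :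
    Phi (Fin.snoc ω f) x =
      ∑ j : Fin (n + 1), (-1) ^ (n + (j : ℕ)) * f (x j) * Phi ω (j.removeNth x) := by
  unfold Phi
  rw [Matrix.det_succ_row _ (Fin.last n)]
  refine Finset.sum_congr rfl fun j _ => ?_
  congr 2
  · simp
  · ext i k
    simp [Fin.removeNth_apply]

lemma Phi_snoc_of_forall_ne {x : Fin (n + 1) → ℝ} {j : Fin (n + 1)}
    (hf : ∀ i ≠ j, f (x i) = 0) :
    Phi (Fin.snoc ω f) x = (-1) ^ (n + (j : ℕ)) * f (x j) * Phi ω (j.removeNth x) := by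
  rw [Phi_snoc_eq_sum]
  exact Fintype.sum_eq_single j fun i hij => by simp [hf i hij]

lemma Phi_snoc_sub_sum_smul (ω : Fin n → ℝ → ℝ) (f : ℝ → ℝ) (c : Fin n → ℝ)
    (x : Fin (n + 1) → ℝ) :
    Phi (Fin.snoc ω (f - ∑ i, c i • ω i)) x = Phi (Fin.snoc ω f) x := by
  let A : Matrix (Fin (n + 1)) (Fin (n + 1)) ℝ :=
    Matrix.of fun i j => (Fin.snoc ω f : Fin (n + 1) → ℝ → ℝ) i (x j)
  let d : Fin (n + 1) → ℝ := Fin.snoc (fun i => -c i) 1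
  have hrow : Matrix.of (fun i j =>
      (Fin.snoc ω (f - ∑ i, c i • ω i) : Fin (n + 1) → ℝ → ℝ) i (x j)) =
      A.updateRow (Fin.last n) (∑ i, d i • A i) := by
    ext i j
    induction i using Fin.lastCases with
    | last => simp [A, d, Fin.sum_univ_castSucc, sub_eq_neg_add]
    | cast i => simp [A]
  calc Phi (Fin.snoc ω (f - ∑ i, c i • ω i)) x
      = (A.updateRow (Fin.last n) (∑ i, d i • A i)).det := congrArg Matrix.det hrow
    _ = d (Fin.last n) • A.det := Matrix.det_updateRow_sum A _ d
    _ = Phi (Fin.snoc ω f) x := by simp [A, d, Phi]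

lemma exists_sum_smul_eq_of_Phi_ne_zero {x : Fin n → ℝ} (hx : Phi ω x ≠ 0) (y : Fin n → ℝ) :
    ∃ c : Fin n → ℝ, ∀ j, (∑ i, c i • ω i) (x j) = y j := by
  have hunit : IsUnit (Matrix.of fun i j => ω i (x j)) :=
    (Matrix.isUnit_iff_isUnit_det _).2 (isUnit_iff_ne_zero.2 hx)
  obtain ⟨c, hc⟩ := Matrix.vecMul_surjective_iff_isUnit.2 hunit y
  exact ⟨c, fun j => by simpa [Matrix.vecMul, dotProduct] using congrFun hc j⟩

end Determinant

section Deletion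

variable {n : ℕ} {ω : Fin n → ℝ → ℝ} {f : ℝ → ℝ}

lemma IsPosChebyshev.mono_s11 {S T : Set ℝ} (hω : IsPosChebyshev ω T) (hST : S ⊆ T) :
    IsPosChebyshev ω S :=
  fun x hx hxS => hω x hx fun j => hST (hxS j)

lemma IsPosChebyshev.Phi_comp_pos {m : ℕ} {x : Fin m → ℝ} (hω : IsPosChebyshev ω (range x))
    (hx : StrictMono x) {e : Fin n → Fin m} (he : StrictMono e) : 0 < Phi ω (x ∘ e) :=
  hω _ (hx.comp he) fun j => mem_range_self (e j)

lemma OmegaConvexOn.mono_s11 {S T : Set ℝ} (hf : OmegaConvexOn ω T f) (hST : S ⊆ T) :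
    OmegaConvexOn ω S f :=
  fun x hx hxS => hf x hx fun j => hST (hxS j)

variable {x : Fin (n + 2) → ℝ} {k : Fin (n + 2)}

lemma Phi_snoc_removeNth_nonneg_of_interior_eq_zero (hω : IsPosChebyshev ω (range x))
    (hx : StrictMono x) (hf : ∀ i, i ≠ 0 → i ≠ Fin.last (n + 1) → f (x i) = 0)
    (hk₀ : k ≠ 0) (hk : k ≠ Fin.last (n + 1))
    (htail : 0 ≤ Phi (Fin.snoc ω f) (Fin.tail x))
    (hinit : 0 ≤ Phi (Fin.snoc ω f) (Fin.init x)) :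
    0 ≤ Phi (Fin.snoc ω f) (k.removeNth x) := by
  have hinterior : 0 < Phi ω (Fin.init (Fin.tail x)) :=
    hω.Phi_comp_pos hx (Fin.strictMono_succ.comp Fin.strictMono_castSucc)
  have heven : (-1 : ℝ) ^ (n + (Fin.last n : ℕ)) = 1 := Even.neg_one_pow ⟨n, rfl⟩
  have hlast : 0 ≤ f (x (Fin.last (n + 1))) := by
    have hzero : ∀ i ≠ Fin.last n, f (Fin.tail x i) = 0 := fun i hi =>
      hf i.succ (Fin.succ_ne_zero i) ((Fin.succ_ne_last_iff i).2 hi)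
    rw [Phi_snoc_of_forall_ne hzero, heven, one_mul, Fin.removeNth_last] at htail
    exact nonneg_of_mul_nonneg_left htail hinterior
  have hfirst : 0 ≤ (-1) ^ n * f (x 0) := by
    have hzero : ∀ i ≠ 0, f (Fin.init x i) = 0 := fun i hi =>
      hf i.castSucc (Fin.castSucc_ne_zero_iff.2 hi) (Fin.castSucc_ne_last i)
    rw [Phi_snoc_of_forall_ne hzero, Fin.removeNth_zero, Fin.tail_init_eq_init_tail] at hinit
    exact nonneg_of_mul_nonneg_left hinit hinterior
  rw [Phi_snoc_eq_sum]
  refine Finset.sum_nonneg fun j _ => mul_nonneg ?_ (hω.Phi_comp_pos hx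
    ((Fin.strictMono_succAbove k).comp (Fin.strictMono_succAbove j))).le
  rw [Fin.removeNth_apply]
  rcases eq_or_ne j 0 with rfl | hj₀
  · simpa [Fin.succAbove_ne_zero_zero hk₀] using hfirst
  rcases eq_or_ne j (Fin.last n) with rfl | hj
  · rwa [Fin.succAbove_ne_last_last hk, heven, one_mul]
  · rw [hf _ (Fin.succAbove_ne_zero hk₀ hj₀) (Fin.succAbove_ne_last hk hj), mul_zero]

lemma Phi_snoc_removeNth_nonneg (hω : IsPosChebyshev ω (range x)) (hx : StrictMono x)
    (hk₀ : k ≠ 0) (hk : k ≠ Fin.last (n + 1))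
    (htail : 0 ≤ Phi (Fin.snoc ω f) (Fin.tail x))
    (hinit : 0 ≤ Phi (Fin.snoc ω f) (Fin.init x)) :
    0 ≤ Phi (Fin.snoc ω f) (k.removeNth x) := by
  have hinterior : 0 < Phi ω fun j => x j.castSucc.succ :=
    hω.Phi_comp_pos hx (Fin.strictMono_succ.comp Fin.strictMono_castSucc)
  obtain ⟨c, hc⟩ := exists_sum_smul_eq_of_Phi_ne_zero hinterior.ne' fun j => f (x j.castSucc.succ)
  rw [← Phi_snoc_sub_sum_smul ω f c] at htail hinit ⊢
  refine Phi_snoc_removeNth_nonneg_of_interior_eq_zero hω hx (fun i hi₀ hi => ?_) hk₀ hk htail hinit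
  obtain ⟨j, rfl⟩ := Fin.exists_succ_eq.2 hi₀
  obtain ⟨l, rfl⟩ := Fin.exists_castSucc_eq.2 ((Fin.succ_ne_last_iff j).1 hi)
  exact sub_eq_zero.2 (hc l).symm

end Deletion

section Localization

variable {n : ℕ} {ω : Fin n → ℝ → ℝ} {f : ℝ → ℝ}

lemma omegaConvexOn_of_consecutive {S : Set ℝ} (hS : S.Finite) (hω : IsPosChebyshev ω S)
    (hconsec : ∀ x : Fin (n + 1) → ℝ, StrictMono x → (∀ j, x j ∈ S) →
      (∀ j : Fin n, Disjoint S (Ioo (x j.castSucc) (x j.succ))) → 0 ≤ Phi (Fin.snoc ω f) x) :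
    OmegaConvexOn ω S f := by
  by_contra hneg
  let B : Set (Fin (n + 1) → ℝ) :=
    {x | StrictMono x ∧ (∀ j, x j ∈ S) ∧ Phi (Fin.snoc ω f) x < 0}
  have hBfin : B.Finite := (Finite.pi' fun _ => hS).subset fun x hx => hx.2.1
  have hBne : B.Nonempty := by simpa [OmegaConvexOn, B, Set.Nonempty] using hneg
  obtain ⟨x, ⟨hx, hxS, hxneg⟩, hmin⟩ :=
    exists_min_image B (fun x => x (Fin.last n) - x 0) hBfin hBne
  have hshorter : ∀ y : Fin (n + 1) → ℝ, StrictMono y → (∀ j, y j ∈ S) →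
      y (Fin.last n) - y 0 < x (Fin.last n) - x 0 → 0 ≤ Phi (Fin.snoc ω f) y :=
    fun y hy hyS hlt => not_lt.1 fun hyneg => (hmin y ⟨hy, hyS, hyneg⟩).not_gt hlt
  refine hxneg.not_ge (hconsec x hx hxS fun j => disjoint_left.2 fun g hgS hg => hxneg.not_ge ?_)
  let k : Fin (n + 2) := j.castSucc.succ
  have hk₀ : k ≠ 0 := Fin.succ_ne_zero _
  have hk : k ≠ Fin.last (n + 1) := (Fin.succ_ne_last_iff _).2 (Fin.castSucc_ne_last j)
  let y : Fin (n + 2) → ℝ := k.insertNth g x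
  have hy : StrictMono y := Fin.strictMono_insertNth hx j g hg.1 hg.2
  have hyS : ∀ i, y i ∈ S := (Fin.forall_iff_succAbove k).2 (by simpa [y] using ⟨hgS, hxS⟩)
  have hyx : k.removeNth y = x := Fin.removeNth_insertNth (α := fun _ => ℝ) k g x
  have hy₀ : y 0 = x 0 := by rw [← hyx, Fin.removeNth_apply, Fin.succAbove_ne_zero_zero hk₀]
  have hyl : y (Fin.last (n + 1)) = x (Fin.last n) := by
    rw [← hyx, Fin.removeNth_apply, Fin.succAbove_ne_last_last hk]
  rw [← hyx]
  refine Phi_snoc_removeNth_nonneg (hω.mono_s11 (range_subset_iff.2 hyS)) hy hk₀ hk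
    (hshorter _ (hy.comp Fin.strictMono_succ) (fun i => hyS _) ?_)
    (hshorter _ (hy.comp Fin.strictMono_castSucc) (fun i => hyS _) ?_)
  · rw [← hyl, ← hy₀]
    exact sub_lt_sub_left (hy (Fin.succ_pos 0)) _
  · rw [← hyl, ← hy₀]
    exact sub_lt_sub_right (hy (Fin.castSucc_lt_last _)) _

variable {a b : ℝ}

lemma omegaConvexOn_Icc_of_span_lt {δ : ℝ} (hδ : 0 < δ) (hω : IsPosChebyshev ω (Icc a b))
    (hshort : ∀ x : Fin (n + 1) → ℝ, StrictMono x → (∀ j, x j ∈ Icc a b) →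
      x (Fin.last n) - x 0 < δ → 0 ≤ Phi (Fin.snoc ω f) x) :
    OmegaConvexOn ω (Icc a b) f := by
  intro x hx hxI
  have hn : (0 : ℝ) < n + 1 := by positivity
  obtain ⟨G, hGI, hGfin, hG⟩ := exists_finite_subset_Icc_inter_Ioo_nonempty a b (div_pos hδ hn)
  have hSI : G ∪ range x ⊆ Icc a b := union_subset hGI (range_subset_iff.2 hxI)
  refine omegaConvexOn_of_consecutive (hGfin.union (finite_range x)) (hω.mono_s11 hSI) ?_ x hx
    fun j => .inr (mem_range_self j)
  intro t ht htS hconsec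
  have hgap : ∀ j : Fin n, t j.succ - t j.castSucc ≤ δ / (n + 1) := by
    intro j
    by_contra! hlt
    obtain ⟨g, hgG, hg⟩ := hG _ (hSI (htS _)) _ (hSI (htS _)) hlt
    exact disjoint_left.1 (hconsec j) (.inl hgG) hg
  refine hshort t ht (fun j => hSI (htS j)) ?_
  calc t (Fin.last n) - t 0 ≤ n • (δ / (n + 1)) := sub_le_nsmul_of_succ_sub_castSucc_le hgap
    _ < (n + 1) * (δ / (n + 1)) := by
      rw [nsmul_eq_mul]
      exact mul_lt_mul_of_pos_right (lt_add_one _) (div_pos hδ hn)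
    _ = δ := mul_div_cancel₀ δ hn.ne'

lemma omegaConvexOn_Icc_of_locally (hω : IsPosChebyshev ω (Icc a b))
    (hloc : ∀ p ∈ Icc a b, ∃ V ∈ nhdsWithin p (Icc a b), OmegaConvexOn ω V f) :
    OmegaConvexOn ω (Icc a b) f := by
  choose V hV hVf using hloc
  obtain ⟨δ, hδ, hball⟩ :=
    Metric.uniformity_basis_dist.lebesgue_number_lemma_nhdsWithin' isCompact_Icc hV
  refine omegaConvexOn_Icc_of_span_lt hδ hω fun x hx hxI hspan => ?_
  obtain ⟨p, hp⟩ := hball (x 0) (hxI 0)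
  refine hVf p p.2 x hx fun j => hp ⟨?_, hxI j⟩
  have h₀ : x 0 ≤ x j := hx.monotone (Fin.zero_le j)
  have hl : x j ≤ x (Fin.last n) := hx.monotone (Fin.le_last j)
  change dist (x 0) (x j) < δ
  rw [dist_comm, Real.dist_eq, abs_of_nonneg (sub_nonneg.2 h₀)]
  linarith

end Localization

/-- **Corollary 7 (localizability of ω-convexity).** `f` is `ω`-convex on `I` if and
only if every point `p ∈ I` has a neighborhood `U` such that `f` is `ω`-convex
on `U ∩ I`. -/
theorem omegaConvexOn_iff_locally
    (n : ℕ) (hn : 0 < n) (I : Set ℝ) (hI : I.OrdConnected)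
    (hne : ∃ a ∈ I, ∃ b ∈ I, a < b)
    (ω : Fin n → ℝ → ℝ) (hω : IsPosChebyshev ω I) (f : ℝ → ℝ) :
    OmegaConvexOn ω I f ↔ ∀ p ∈ I, ∃ U ∈ nhds p, OmegaConvexOn ω (U ∩ I) f := by
  constructor
  · intro hf p _
    exact ⟨univ, Filter.univ_mem, hf.mono_s11 inter_subset_right⟩
  · intro hloc x hx hxI
    have hsub : Icc (x 0) (x (Fin.last n)) ⊆ I := hI.out (hxI _) (hxI _)
    refine omegaConvexOn_Icc_of_locally (hω.mono_s11 hsub) (fun p hp => ?_) x hx fun j =>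
      ⟨hx.monotone (Fin.zero_le j), hx.monotone (Fin.le_last j)⟩
    obtain ⟨U, hU, hUf⟩ := hloc p (hsub hp)
    exact ⟨U ∩ Icc (x 0) (x (Fin.last n)), Filter.inter_mem (mem_nhdsWithin_of_mem_nhds hU)
      self_mem_nhdsWithin, hUf.mono_s11 (inter_subset_inter_right U hsub)⟩
end

section
/- Let I ⊆ ℝ be a nondegenerate interval, let ω = (ω_1,ω_2) be a 2-dimensional positive Chebyshev system over I, and let ω_3 : I → ℝ be such that ω* = (ω_1,ω_2,ω_3) is a 3-dimensional positive Chebyshev system over I. Let (t_1,t_2) ∈ ℝ₊² and f : I → ℝ. Then, for every x, y ∈ I with x < y, there exists p ∈ [x,y] such that [x, (t_2x+t_1y)/(t_1+t_2), y; f]_{ω*} ≥ min{ D̲_{((t_1,t_2),ω*)} f(p), D̲_{((t_2,t_1),ω*)} f(p) }. -/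
/-- The partial sum `t₁ + ⋯ + tⱼ` (empty for `j = 0`, everything for `j = n`). -/
noncomputable def psum {n : ℕ} (t : Fin n → ℝ) (j : Fin (n + 1)) : ℝ :=
  ∑ i ∈ Finset.univ.filter (fun i : Fin n => (i : ℕ) < (j : ℕ)), t i

/-- `f` is `(t,ω)`-convex on `J`:
`Φ_{(ω,f)}(x, x+t₁h, x+(t₁+t₂)h, …, x+(t₁+⋯+tₙ)h) ≥ 0`
for all `x ∈ J` and `h > 0` with `x+(t₁+⋯+tₙ)h ∈ J`. -/
def TOmegaConvexOn {n : ℕ} (ω : Fin n → ℝ → ℝ) (t : Fin n → ℝ) (J : Set ℝ) (f : ℝ → ℝ) : Prop :=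
  ∀ x ∈ J, ∀ h : ℝ, 0 < h → x + psum t (Fin.last n) * h ∈ J →
    0 ≤ Phi (Fin.snoc ω f) (fun j => x + psum t j * h)

/-- The tuple `x, ((T−s₁)x+s₁y)/T, …, ((T−s_{n−1})x+s_{n−1}y)/T, y`
where `sⱼ = t₁+⋯+tⱼ` and `T = sₙ`. -/
noncomputable def jpts {n : ℕ} (t : Fin n → ℝ) (x y : ℝ) : Fin (n + 1) → ℝ :=
  fun j => ((psum t (Fin.last n) - psum t j) * x + psum t j * y) / psum t (Fin.last n)

/-- The lower Dinghas type derivative `D̲_{(t,ω*)} f(p)`: the limit, as `δ → 0⁺`, of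
the infimum of `[x, ((T−s₁)x+s₁y)/T, …, y; f]_{ω*}` over `x,y ∈ I` with `x < y`,
`x ≤ p ≤ y`, `y − x < δ`; realized as a `liminf` (with values in `EReal`). -/
noncomputable def dinghasT {n : ℕ} (ω : Fin n → ℝ → ℝ) (ω' : ℝ → ℝ) (t : Fin n → ℝ)
    (f : ℝ → ℝ) (I : Set ℝ) (p : ℝ) : EReal :=
  Filter.liminf (fun q : ℝ × ℝ => (divDiff ω ω' f (jpts t q.1 q.2) : EReal))
    (⨅ δ ∈ Set.Ioi (0 : ℝ), Filter.principal
      {q : ℝ × ℝ | q.1 ∈ I ∧ q.2 ∈ I ∧ q.1 < q.2 ∧ q.1 ≤ p ∧ p ≤ q.2 ∧ q.2 - q.1 < δ})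

/-!
For four points `a < b < c < d`, the three-term determinant relations express `[a, c, d; f]` and
`[a, b, d; f]` as weighted means of `[a, b, c; f]` and `[b, c, d; f]`. Let `m` divide `[x, y]` in
the ratio `s : 1 - s`, let `a` divide `[x, m]` in the ratio `1 - s : s` and let `b` divide `[m, y]`
in the ratio `s : 1 - s`. Then `m` again divides `[a, b]` in the ratio `s : 1 - s`, and applying the
mean property twice, one of `[x, a, m; f]`, `[a, m, b; f]`, `[m, b, y; f]` is at most
`[x, m, y; f]`. Up to exchanging `s` and `1 - s` this replaces `[x, y]` by a subinterval of length
at most `max s (1 - s) * (y - x)`. Iterating, the intervals shrink to a point `p`, and one of the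
two ratios occurs along arbitrarily short intervals containing `p`.
-/

open AffineMap Filter Set

section ChebyshevSystem

variable {ω : Fin 2 → ℝ → ℝ} {ω' : ℝ → ℝ} {I : Set ℝ} {a b c d : ℝ}

theorem Phi_pair (ω : Fin 2 → ℝ → ℝ) (a b : ℝ) :
    Phi ω ![a, b] = ω 0 a * ω 1 b - ω 0 b * ω 1 a := by
  simp [Phi, Matrix.det_fin_two]

theorem Phi_snoc_triple (ω : Fin 2 → ℝ → ℝ) (g : ℝ → ℝ) (a b c : ℝ) :
    Phi (Fin.snoc ω g) ![a, b, c] =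
      g a * Phi ω ![b, c] - g b * Phi ω ![a, c] + g c * Phi ω ![a, b] := by
  have h₀ : (Fin.snoc ω g : Fin 3 → ℝ → ℝ) 0 = ω 0 := rfl
  have h₁ : (Fin.snoc ω g : Fin 3 → ℝ → ℝ) 1 = ω 1 := rfl
  have h₂ : (Fin.snoc ω g : Fin 3 → ℝ → ℝ) 2 = g := rfl
  rw [Phi, Matrix.det_fin_three]
  simp only [Matrix.of_apply, h₀, h₁, h₂, Matrix.cons_val, Phi_pair]
  ring

theorem Phi_snoc_triple_mul_Phi_eq_omit_second (ω : Fin 2 → ℝ → ℝ) (g : ℝ → ℝ) (a b c d : ℝ) :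
    Phi (Fin.snoc ω g) ![a, c, d] * Phi ω ![b, c] =
      Phi (Fin.snoc ω g) ![a, b, c] * Phi ω ![c, d] +
        Phi (Fin.snoc ω g) ![b, c, d] * Phi ω ![a, c] := by
  simp only [Phi_snoc_triple, Phi_pair]
  ring

theorem Phi_snoc_triple_mul_Phi_eq_omit_third (ω : Fin 2 → ℝ → ℝ) (g : ℝ → ℝ) (a b c d : ℝ) :
    Phi (Fin.snoc ω g) ![a, b, d] * Phi ω ![b, c] =
      Phi (Fin.snoc ω g) ![a, b, c] * Phi ω ![b, d] +
        Phi (Fin.snoc ω g) ![b, c, d] * Phi ω ![a, b] := by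
  simp only [Phi_snoc_triple, Phi_pair]
  ring

theorem IsPosChebyshev.Phi_pair_pos (hω : IsPosChebyshev ω I) (ha : a ∈ I) (hb : b ∈ I)
    (hab : a < b) : 0 < Phi ω ![a, b] :=
  hω _ (by simp [hab]) (by simp [Fin.forall_fin_two, ha, hb])

theorem IsPosChebyshev.Phi_triple_pos {ω : Fin 3 → ℝ → ℝ} (hω : IsPosChebyshev ω I) (ha : a ∈ I)
    (hb : b ∈ I) (hc : c ∈ I) (hab : a < b) (hbc : b < c) : 0 < Phi ω ![a, b, c] :=
  hω _ (by simp [hab, hbc]) (by simp [Fin.forall_fin_succ, ha, hb, hc])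

theorem min_div_le_div_of_mul_eq_add {K : Type*} [Field K] [LinearOrder K] [IsStrictOrderedRing K]
    {N D N₁ D₁ N₂ D₂ w w₁ w₂ : K} (hD : 0 < D) (hD₁ : 0 < D₁) (hD₂ : 0 < D₂) (hw : 0 < w)
    (hw₁ : 0 ≤ w₁) (hw₂ : 0 ≤ w₂) (hN : N * w = N₁ * w₁ + N₂ * w₂)
    (hDw : D * w = D₁ * w₁ + D₂ * w₂) : min (N₁ / D₁) (N₂ / D₂) ≤ N / D := by
  set k := min (N₁ / D₁) (N₂ / D₂)
  have h₁ : k * D₁ ≤ N₁ := (le_div_iff₀ hD₁).1 (min_le_left _ _)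
  have h₂ : k * D₂ ≤ N₂ := (le_div_iff₀ hD₂).1 (min_le_right _ _)
  refine (le_div_iff₀ hD).2 (le_of_mul_le_mul_right ?_ hw)
  calc k * D * w = k * D₁ * w₁ + k * D₂ * w₂ := by rw [mul_assoc, hDw]; ring
    _ ≤ N₁ * w₁ + N₂ * w₂ := by gcongr
    _ = N * w := hN.symm

theorem min_divDiff_le_divDiff_omit_second (hω : IsPosChebyshev ω I)
    (hω' : IsPosChebyshev (Fin.snoc ω ω') I) (ha : a ∈ I) (hb : b ∈ I) (hc : c ∈ I) (hd : d ∈ I)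
    (hab : a < b) (hbc : b < c) (hcd : c < d) (f : ℝ → ℝ) :
    min (divDiff ω ω' f ![a, b, c]) (divDiff ω ω' f ![b, c, d]) ≤ divDiff ω ω' f ![a, c, d] :=
  min_div_le_div_of_mul_eq_add (hω'.Phi_triple_pos ha hc hd (hab.trans hbc) hcd)
    (hω'.Phi_triple_pos ha hb hc hab hbc) (hω'.Phi_triple_pos hb hc hd hbc hcd)
    (hω.Phi_pair_pos hb hc hbc) (hω.Phi_pair_pos hc hd hcd).le
    (hω.Phi_pair_pos ha hc (hab.trans hbc)).le
    (Phi_snoc_triple_mul_Phi_eq_omit_second ω f a b c d)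
    (Phi_snoc_triple_mul_Phi_eq_omit_second ω ω' a b c d)

theorem min_divDiff_le_divDiff_omit_third (hω : IsPosChebyshev ω I)
    (hω' : IsPosChebyshev (Fin.snoc ω ω') I) (ha : a ∈ I) (hb : b ∈ I) (hc : c ∈ I) (hd : d ∈ I)
    (hab : a < b) (hbc : b < c) (hcd : c < d) (f : ℝ → ℝ) :
    min (divDiff ω ω' f ![a, b, c]) (divDiff ω ω' f ![b, c, d]) ≤ divDiff ω ω' f ![a, b, d] :=
  min_div_le_div_of_mul_eq_add (hω'.Phi_triple_pos ha hb hd hab (hbc.trans hcd))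
    (hω'.Phi_triple_pos ha hb hc hab hbc) (hω'.Phi_triple_pos hb hc hd hbc hcd)
    (hω.Phi_pair_pos hb hc hbc) (hω.Phi_pair_pos hb hd (hbc.trans hcd)).le
    (hω.Phi_pair_pos ha hb hab).le
    (Phi_snoc_triple_mul_Phi_eq_omit_third ω f a b c d)
    (Phi_snoc_triple_mul_Phi_eq_omit_third ω ω' a b c d)

theorem min_divDiff_refinement_le_divDiff {x m y : ℝ} (hω : IsPosChebyshev ω I)
    (hω' : IsPosChebyshev (Fin.snoc ω ω') I) (hx : x ∈ I) (ha : a ∈ I) (hm : m ∈ I) (hb : b ∈ I)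
    (hy : y ∈ I) (hxa : x < a) (ham : a < m) (hmb : m < b) (hby : b < y) (f : ℝ → ℝ) :
    min (min (divDiff ω ω' f ![x, a, m]) (divDiff ω ω' f ![a, m, b])) (divDiff ω ω' f ![m, b, y]) ≤
      divDiff ω ω' f ![x, m, y] :=
  (min_le_min_right _ <|
    min_divDiff_le_divDiff_omit_second hω hω' hx ha hm hb hxa ham hmb f).trans <|
    min_divDiff_le_divDiff_omit_third hω hω' hx hm hb hy (hxa.trans ham) hmb hby f

end ChebyshevSystem

section RatioSubdivision

/-- The divided difference `[x, (1 - s) x + s y, y; f]_{ω*}` whose middle node divides `[x, y]` in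
the ratio `s : 1 - s`. The weights `(t₁, t₂)` of `jpts` enter only through `s = t₁ / (t₁ + t₂)`. -/
noncomputable def ratioDivDiff (ω : Fin 2 → ℝ → ℝ) (ω' f : ℝ → ℝ) (s x y : ℝ) : ℝ :=
  divDiff ω ω' f ![x, lineMap x y s, y]

theorem jpts_eq_lineMap {n : ℕ} {t : Fin n → ℝ} (ht : psum t (Fin.last n) ≠ 0) (x y : ℝ) :
    jpts t x y = fun j => lineMap x y (psum t j / psum t (Fin.last n)) := by
  funext j
  rw [jpts, lineMap_apply_ring']
  field_simp
  ring

theorem jpts_pair {t₁ t₂ : ℝ} (ht : t₁ + t₂ ≠ 0) (x y : ℝ) :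
    jpts ![t₁, t₂] x y = ![x, lineMap x y (t₁ / (t₁ + t₂)), y] := by
  have h₀ : psum ![t₁, t₂] 0 = 0 := by simp [psum]
  have h₁ : psum ![t₁, t₂] 1 = t₁ := by simp [psum, Finset.sum_filter]
  have h₂ : psum ![t₁, t₂] 2 = t₁ + t₂ := by simp [psum, Finset.sum_filter]
  have hlast : psum ![t₁, t₂] (Fin.last 2) = t₁ + t₂ := h₂
  rw [jpts_eq_lineMap (hlast ▸ ht), hlast]
  ext j
  fin_cases j <;> simp [h₀, h₁, h₂, div_self ht]

theorem lineMap_lineMap_lineMap_self (x y s : ℝ) :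
    lineMap (lineMap x (lineMap x y s) (1 - s)) (lineMap (lineMap x y s) y s) s =
      lineMap x y s := by
  simp only [lineMap_apply_ring']
  ring

variable {ω : Fin 2 → ℝ → ℝ} {ω' : ℝ → ℝ} {I : Set ℝ} {s x y : ℝ}

theorem exists_subinterval_min_ratioDivDiff_le_ratioDivDiff (hI : I.OrdConnected)
    (hω : IsPosChebyshev ω I) (hω' : IsPosChebyshev (Fin.snoc ω ω') I) (hs₀ : 0 < s) (hs₁ : s < 1)
    (hx : x ∈ I) (hy : y ∈ I) (hxy : x < y) (f : ℝ → ℝ) :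
    ∃ x' y', x ≤ x' ∧ x' < y' ∧ y' ≤ y ∧ y' - x' ≤ max s (1 - s) * (y - x) ∧
      min (ratioDivDiff ω ω' f s x' y') (ratioDivDiff ω ω' f (1 - s) x' y') ≤
        ratioDivDiff ω ω' f s x y := by
  set m := lineMap x y s with hm
  set a := lineMap x m (1 - s) with ha
  set b := lineMap m y s with hb
  have hxm : x < m := (left_lt_lineMap_iff_lt hs₀).2 hxy
  have hmy : m < y := (lineMap_lt_right_iff_lt hs₁).2 hxy
  have hxa : x < a := (left_lt_lineMap_iff_lt (sub_pos.2 hs₁)).2 hxm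
  have ham : a < m := (lineMap_lt_right_iff_lt (sub_lt_self 1 hs₀)).2 hxm
  have hmb : m < b := (left_lt_lineMap_iff_lt hs₀).2 hmy
  have hby : b < y := (lineMap_lt_right_iff_lt hs₁).2 hmy
  have hmI : m ∈ I := hI.out hx hy ⟨hxm.le, hmy.le⟩
  have haI : a ∈ I := hI.out hx hmI ⟨hxa.le, ham.le⟩
  have hbI : b ∈ I := hI.out hmI hy ⟨hmb.le, hby.le⟩
  have habm : lineMap a b s = m := lineMap_lineMap_lineMap_self x y s
  have hlen_s : s * (y - x) ≤ max s (1 - s) * (y - x) :=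
    mul_le_mul_of_nonneg_right (le_max_left _ _) (sub_nonneg.2 hxy.le)
  have hlen_one_sub : (1 - s) * (y - x) ≤ max s (1 - s) * (y - x) :=
    mul_le_mul_of_nonneg_right (le_max_right _ _) (sub_nonneg.2 hxy.le)
  have hmx : m - x = s * (y - x) := by rw [hm, lineMap_apply_ring']; ring
  have hym : y - m = (1 - s) * (y - x) := by rw [hm, lineMap_apply_ring']; ring
  have hba : b - a = s * (y - x) := by simp only [hb, ha, hm, lineMap_apply_ring']; ring
  have hmin := min_divDiff_refinement_le_divDiff hω hω' hx haI hmI hbI hy hxa ham hmb hby f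
  rcases min_le_iff.1 hmin with hmin | hmby
  · rcases min_le_iff.1 hmin with hxam | hamb
    · exact ⟨x, m, le_rfl, hxm, hmy.le, hmx.trans_le hlen_s, min_le_of_right_le hxam⟩
    · refine ⟨a, b, hxa.le, ham.trans hmb, hby.le, hba.trans_le hlen_s, min_le_of_left_le ?_⟩
      rwa [ratioDivDiff, habm]
  · exact ⟨m, y, hxm.le, hmy, le_rfl, hym.trans_le hlen_one_sub, min_le_of_left_le hmby⟩

theorem exists_subinterval_min_ratioDivDiff_le_min (hI : I.OrdConnected)
    (hω : IsPosChebyshev ω I) (hω' : IsPosChebyshev (Fin.snoc ω ω') I) (hs₀ : 0 < s) (hs₁ : s < 1)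
    (hx : x ∈ I) (hy : y ∈ I) (hxy : x < y) (f : ℝ → ℝ) :
    ∃ x' y', x ≤ x' ∧ x' < y' ∧ y' ≤ y ∧ y' - x' ≤ max s (1 - s) * (y - x) ∧
      min (ratioDivDiff ω ω' f s x' y') (ratioDivDiff ω ω' f (1 - s) x' y') ≤
        min (ratioDivDiff ω ω' f s x y) (ratioDivDiff ω ω' f (1 - s) x y) := by
  rcases min_choice (ratioDivDiff ω ω' f s x y) (ratioDivDiff ω ω' f (1 - s) x y) with h | h <;>
    rw [h]
  · exact exists_subinterval_min_ratioDivDiff_le_ratioDivDiff hI hω hω' hs₀ hs₁ hx hy hxy f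
  · simpa only [sub_sub_cancel, max_comm, min_comm] using
      exists_subinterval_min_ratioDivDiff_le_ratioDivDiff hI hω hω' (sub_pos.2 hs₁)
        (sub_lt_self 1 hs₀) hx hy hxy f

end RatioSubdivision

section NestedIntervals

theorem exists_mem_Icc_forall_short_of_shrinking {Q : ℝ × ℝ → Prop} {r : ℝ} (hr₀ : 0 ≤ r)
    (hr₁ : r < 1) (hle : ∀ q, Q q → q.1 ≤ q.2)
    (hstep : ∀ q, Q q → ∃ q', Q q' ∧ q.1 ≤ q'.1 ∧ q'.2 ≤ q.2 ∧ q'.2 - q'.1 ≤ r * (q.2 - q.1))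
    {q₀ : ℝ × ℝ} (hq₀ : Q q₀) :
    ∃ p ∈ Icc q₀.1 q₀.2, ∀ δ > 0, ∃ q, Q q ∧ p ∈ Icc q.1 q.2 ∧ q.2 - q.1 < δ := by
  choose! F hFQ hFleft hFright hFlen using hstep
  let u : ℕ → ℝ × ℝ := fun n => F^[n] q₀
  have hu_succ (n : ℕ) : u (n + 1) = F (u n) := Function.iterate_succ_apply' F n q₀
  have huQ (n : ℕ) : Q (u n) := Function.Iterate.rec Q hq₀ hFQ n
  have hleft : Monotone fun n => (u n).1 :=
    monotone_nat_of_le_succ fun n => hu_succ n ▸ hFleft _ (huQ n)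
  have hright : Antitone fun n => (u n).2 :=
    antitone_nat_of_succ_le fun n => hu_succ n ▸ hFright _ (huQ n)
  have hp := mem_iInter.1 <|
    hleft.ciSup_mem_iInter_Icc_of_antitone hright fun n => hle _ (huQ n)
  have hlen (n : ℕ) : (u n).2 - (u n).1 ≤ r ^ n * (q₀.2 - q₀.1) := by
    induction n with
    | zero => simp [u]
    | succ n ih =>
      calc (u (n + 1)).2 - (u (n + 1)).1 ≤ r * ((u n).2 - (u n).1) := hu_succ n ▸ hFlen _ (huQ n)
        _ ≤ r * (r ^ n * (q₀.2 - q₀.1)) := mul_le_mul_of_nonneg_left ih hr₀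
        _ = r ^ (n + 1) * (q₀.2 - q₀.1) := by ring
  have hlim : Tendsto (fun n => r ^ n * (q₀.2 - q₀.1)) atTop (nhds 0) := by
    simpa using (tendsto_pow_atTop_nhds_zero_of_lt_one hr₀ hr₁).mul_const (q₀.2 - q₀.1)
  refine ⟨⨆ n, (u n).1, hp 0, fun δ hδ => ?_⟩
  obtain ⟨n, hn⟩ := (hlim.eventually_lt_const hδ).exists
  exact ⟨u n, huQ n, hp n, (hlen n).trans_lt hn⟩

/-- The filter, as `δ → 0⁺`, of the pairs of endpoints in `I` of nondegenerate intervals of length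
less than `δ` containing `p`; `dinghasT` is a `liminf` along it. -/
def straddling (I : Set ℝ) (p : ℝ) : Filter (ℝ × ℝ) :=
  ⨅ δ ∈ Ioi (0 : ℝ), 𝓟 {q | q.1 ∈ I ∧ q.2 ∈ I ∧ q.1 < q.2 ∧ q.1 ≤ p ∧ p ≤ q.2 ∧ q.2 - q.1 < δ}

theorem hasBasis_straddling (I : Set ℝ) (p : ℝ) :
    (straddling I p).HasBasis (fun δ : ℝ => 0 < δ) fun δ =>
      {q | q.1 ∈ I ∧ q.2 ∈ I ∧ q.1 < q.2 ∧ q.1 ≤ p ∧ p ≤ q.2 ∧ q.2 - q.1 < δ} := by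
  refine hasBasis_biInf_principal' (p := fun δ : ℝ => 0 < δ)
    (fun δ hδ ε hε => ⟨min δ ε, lt_min hδ hε, ?_, ?_⟩) ⟨1, one_pos⟩
  · exact fun q ⟨h₁, h₂, hlt, hp₁, hp₂, hlen⟩ =>
      ⟨h₁, h₂, hlt, hp₁, hp₂, hlen.trans_le (min_le_left _ _)⟩
  · exact fun q ⟨h₁, h₂, hlt, hp₁, hp₂, hlen⟩ =>
      ⟨h₁, h₂, hlt, hp₁, hp₂, hlen.trans_le (min_le_right _ _)⟩

theorem exists_mem_Icc_frequently_straddling {I : Set ℝ} (hI : I.OrdConnected) {P : ℝ → ℝ → Prop}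
    {r : ℝ} (hr₀ : 0 ≤ r) (hr₁ : r < 1)
    (hstep : ∀ a ∈ I, ∀ b ∈ I, a < b → P a b →
      ∃ a' b', a ≤ a' ∧ a' < b' ∧ b' ≤ b ∧ b' - a' ≤ r * (b - a) ∧ P a' b')
    {x y : ℝ} (hx : x ∈ I) (hy : y ∈ I) (hxy : x < y) (hP : P x y) :
    ∃ p ∈ Icc x y, ∃ᶠ q in straddling I p, P q.1 q.2 := by
  let Q : ℝ × ℝ → Prop := fun q => q.1 ∈ I ∧ q.2 ∈ I ∧ q.1 < q.2 ∧ P q.1 q.2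
  have hQstep (q : ℝ × ℝ) (hq : Q q) :
      ∃ q', Q q' ∧ q.1 ≤ q'.1 ∧ q'.2 ≤ q.2 ∧ q'.2 - q'.1 ≤ r * (q.2 - q.1) := by
    obtain ⟨h₁, h₂, hlt, hPq⟩ := hq
    obtain ⟨a, b, ha, hab, hb, hlen, hPab⟩ := hstep _ h₁ _ h₂ hlt hPq
    exact ⟨(a, b), ⟨hI.out h₁ h₂ ⟨ha, hab.le.trans hb⟩, hI.out h₁ h₂ ⟨ha.trans hab.le, hb⟩, hab,
      hPab⟩, ha, hb, hlen⟩
  obtain ⟨p, hp, hshort⟩ := exists_mem_Icc_forall_short_of_shrinking hr₀ hr₁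
    (fun q hq => hq.2.2.1.le) hQstep (q₀ := (x, y)) ⟨hx, hy, hxy, hP⟩
  refine ⟨p, hp, (hasBasis_straddling I p).frequently_iff.2 fun δ hδ => ?_⟩
  obtain ⟨q, ⟨h₁, h₂, hlt, hPq⟩, hpq, hlen⟩ := hshort δ hδ
  exact ⟨q, ⟨h₁, h₂, hlt, hpq.1, hpq.2, hlen⟩, hPq⟩

end NestedIntervals

theorem dinghasT_le_of_frequently_le {n : ℕ} {ω : Fin n → ℝ → ℝ} {ω' f : ℝ → ℝ} {t : Fin n → ℝ}
    {I : Set ℝ} {p k : ℝ}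
    (h : ∃ᶠ q in straddling I p, divDiff ω ω' f (jpts t q.1 q.2) ≤ k) :
    dinghasT ω ω' t f I p ≤ k :=
  liminf_le_of_frequently_le' (h.mono fun _ => EReal.coe_le_coe)

theorem exists_mem_Icc_frequently_min_ratioDivDiff_le {ω : Fin 2 → ℝ → ℝ} {ω' : ℝ → ℝ} {I : Set ℝ}
    {s x y : ℝ} (hI : I.OrdConnected) (hω : IsPosChebyshev ω I)
    (hω' : IsPosChebyshev (Fin.snoc ω ω') I) (hs₀ : 0 < s) (hs₁ : s < 1) (hx : x ∈ I) (hy : y ∈ I)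
    (hxy : x < y) (f : ℝ → ℝ) :
    ∃ p ∈ Icc x y, ∃ᶠ q in straddling I p,
      min (ratioDivDiff ω ω' f s q.1 q.2) (ratioDivDiff ω ω' f (1 - s) q.1 q.2) ≤
        ratioDivDiff ω ω' f s x y := by
  refine exists_mem_Icc_frequently_straddling (r := max s (1 - s))
    (P := fun a b => min (ratioDivDiff ω ω' f s a b) (ratioDivDiff ω ω' f (1 - s) a b) ≤
      ratioDivDiff ω ω' f s x y)
    hI (hs₀.le.trans (le_max_left _ _)) (max_lt hs₁ (sub_lt_self 1 hs₀))
    (fun a ha b hb hab hle => ?_) hx hy hxy (min_le_left _ _)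
  obtain ⟨a', b', haa', hab', hbb', hlen, hmin⟩ :=
    exists_subinterval_min_ratioDivDiff_le_min hI hω hω' hs₀ hs₁ ha hb hab f
  exact ⟨a', b', haa', hab', hbb', hlen, hmin.trans hle⟩

/-- **Theorem 9 (mean value inequality, `n = 2`).** For a 2-dimensional positive
Chebyshev system `ω`, positive `t₁, t₂`, and every `x < y` in `I`, there is
`p ∈ [x,y]` with
`[x, (t₂x+t₁y)/(t₁+t₂), y; f]_{ω*} ≥ min (D̲_{((t₁,t₂),ω*)} f(p), D̲_{((t₂,t₁),ω*)} f(p))`. -/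
theorem divDiff_ge_min_dinghasT_at_some_point
    (I : Set ℝ) (hI : I.OrdConnected) (hne : ∃ a ∈ I, ∃ b ∈ I, a < b)
    (ω : Fin 2 → ℝ → ℝ) (ω' : ℝ → ℝ)
    (hω : IsPosChebyshev ω I) (hωs : IsPosChebyshev (Fin.snoc ω ω') I)
    (t₁ t₂ : ℝ) (ht₁ : 0 < t₁) (ht₂ : 0 < t₂) (f : ℝ → ℝ) :
    ∀ x ∈ I, ∀ y ∈ I, x < y →
      ∃ p ∈ Set.Icc x y,
        min (dinghasT ω ω' ![t₁, t₂] f I p) (dinghasT ω ω' ![t₂, t₁] f I p) ≤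
          (divDiff ω ω' f (jpts ![t₁, t₂] x y) : EReal) := by
  intro x hx y hy hxy
  set s := t₁ / (t₁ + t₂) with hs
  have hs_symm : t₂ / (t₂ + t₁) = 1 - s := by rw [hs]; field_simp; ring
  have hs₀ : 0 < s := by positivity
  have hs₁ : s < 1 := sub_pos.1 (hs_symm ▸ by positivity)
  have hratio (a b : ℝ) : divDiff ω ω' f (jpts ![t₁, t₂] a b) = ratioDivDiff ω ω' f s a b := by
    rw [jpts_pair (by positivity), ratioDivDiff]
  have hratio_symm (a b : ℝ) :
      divDiff ω ω' f (jpts ![t₂, t₁] a b) = ratioDivDiff ω ω' f (1 - s) a b := by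
    rw [jpts_pair (by positivity), ratioDivDiff, hs_symm]
  obtain ⟨p, hp, hfreq⟩ :=
    exists_mem_Icc_frequently_min_ratioDivDiff_le hI hω hωs hs₀ hs₁ hx hy hxy f
  refine ⟨p, hp, ?_⟩
  rw [hratio]
  simp only [min_le_iff, frequently_or_distrib, ← hratio, ← hratio_symm] at hfreq ⊢
  exact hfreq.imp dinghasT_le_of_frequently_le dinghasT_le_of_frequently_le
end

section
/- Let I ⊆ ℝ be a nondegenerate interval, let ω = (ω_1,ω_2) be a 2-dimensional positive Chebyshev system over I, and let ω_3 : I → ℝ be such that ω* = (ω_1,ω_2,ω_3) is a 3-dimensional positive Chebyshev system over I. Let (t_1,t_2) ∈ ℝ₊². Then a function f : I → ℝ is symmetrically ((t_1,t_2),ω)-convex on I if and only if D̲_{((t_1,t_2),ω*)} f(p) ≥ 0 and D̲_{((t_2,t_1),ω*)} f(p) ≥ 0 for all p ∈ I. -/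
/-!
Convexity says that all divided differences `[x, m, y; f]_{ω*}` with `m` splitting `[x, y]` in the
ratio `t₁ : t₂` or `t₂ : t₁` are nonnegative, so it bounds their lower limits below by `0`.
Conversely, for `x < u < m < v < y` the value `[x, m, y; f]_{ω*}` is a weighted mean of those over
`(x, u, m)`, `(u, m, v)` and `(m, v, y)`, hence at least the smallest of the three. One can choose
`u` and `v` so that all three triples again split their intervals in the ratio `t₁ : t₂` or
`t₂ : t₁`. Repeated passage to a smallest one gives nested intervals shrinking to a point `p` along
which the divided difference never exceeds its initial value; so one of the lower Dinghas type
derivatives at `p` is at most that value.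
-/

open Filter Set

section JensenPoints

variable {n : ℕ} {t : Fin n → ℝ}

lemma psum_zero (t : Fin n → ℝ) : psum t 0 = 0 := by
  simp [psum]

lemma psum_last (t : Fin n → ℝ) : psum t (Fin.last n) = ∑ i, t i := by
  simp [psum]

lemma psum_strictMono (ht : ∀ i, 0 < t i) : StrictMono (psum t) := by
  intro j k hjk
  refine Finset.sum_lt_sum_of_subset (i := ⟨j, by omega⟩) ?_ (by simpa using hjk) (by simp)
    (ht _) fun i _ _ => (ht i).le
  exact Finset.monotone_filter_right _ fun i _ hi => hi.trans hjk

lemma psum_last_pos [NeZero n] (ht : ∀ i, 0 < t i) : 0 < psum t (Fin.last n) :=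
  psum_last t ▸ Finset.sum_pos (fun i _ => ht i) Finset.univ_nonempty

lemma jpts_apply (hT : psum t (Fin.last n) ≠ 0) (x y : ℝ) (j : Fin (n + 1)) :
    jpts t x y j = x + psum t j * ((y - x) / psum t (Fin.last n)) := by
  simp only [jpts]
  field_simp
  ring

lemma jpts_zero (hT : psum t (Fin.last n) ≠ 0) (x y : ℝ) : jpts t x y 0 = x := by
  simp [jpts_apply hT, psum_zero]

lemma jpts_last (hT : psum t (Fin.last n) ≠ 0) (x y : ℝ) : jpts t x y (Fin.last n) = y := by
  simp [jpts, mul_div_cancel_left₀ y hT]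

variable [NeZero n] {x y : ℝ}

lemma jpts_strictMono (ht : ∀ i, 0 < t i) (hxy : x < y) : StrictMono (jpts t x y) := by
  intro j k hjk
  have hT := psum_last_pos ht
  rw [jpts_apply hT.ne', jpts_apply hT.ne']
  exact (add_lt_add_iff_left x).2
    (mul_lt_mul_of_pos_right (psum_strictMono ht hjk) (div_pos (sub_pos.2 hxy) hT))

lemma jpts_mem {I : Set ℝ} (hI : I.OrdConnected) (ht : ∀ i, 0 < t i) (hx : x ∈ I) (hy : y ∈ I)
    (hxy : x < y) (j : Fin (n + 1)) : jpts t x y j ∈ I := by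
  have hT := (psum_last_pos ht).ne'
  have hmono := (jpts_strictMono ht hxy).monotone
  exact hI.out hx hy ⟨(jpts_zero hT x y).ge.trans (hmono (Fin.zero_le j)),
    (hmono (Fin.le_last j)).trans (jpts_last hT x y).le⟩

end JensenPoints

section Convexity

variable {n : ℕ} {ω : Fin n → ℝ → ℝ} {t : Fin n → ℝ} {I : Set ℝ} {f : ℝ → ℝ}

lemma tOmegaConvexOn_iff_phi_jpts_nonneg (hT : 0 < psum t (Fin.last n)) :
    TOmegaConvexOn ω t I f ↔
      ∀ x ∈ I, ∀ y ∈ I, x < y → 0 ≤ Phi (Fin.snoc ω f) (jpts t x y) := by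
  simp only [funext (jpts_apply hT.ne' _ _)]
  constructor
  · intro hf x hx y hy hxy
    exact hf x hx _ (div_pos (sub_pos.2 hxy) hT) (by rwa [mul_div_cancel₀ _ hT.ne', add_sub_cancel])
  · intro hf x hx h hh hy
    have hstep := hf x hx _ hy (lt_add_of_pos_right x (mul_pos hT hh))
    rwa [add_sub_cancel_left, mul_div_cancel_left₀ h hT.ne'] at hstep

lemma tOmegaConvexOn_iff_divDiff_jpts_nonneg [NeZero n] {ω' : ℝ → ℝ} (hI : I.OrdConnected)
    (hωs : IsPosChebyshev (Fin.snoc ω ω' : Fin (n + 1) → ℝ → ℝ) I) (ht : ∀ i, 0 < t i) :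
    TOmegaConvexOn ω t I f ↔
      ∀ x ∈ I, ∀ y ∈ I, x < y → 0 ≤ divDiff ω ω' f (jpts t x y) := by
  rw [tOmegaConvexOn_iff_phi_jpts_nonneg (psum_last_pos ht)]
  refine forall₅_congr fun x hx y hy hxy => ?_
  have hpos := hωs _ (jpts_strictMono ht hxy) (jpts_mem hI ht hx hy hxy)
  rw [divDiff, le_div_iff₀ hpos, zero_mul]

end Convexity

section DinghasDerivative

/-- The filter generated by the pairs `(x, y)` of points of `I` with `x < y`, `x ≤ p ≤ y` and
`y - x < δ`, as `δ → 0⁺`; the lower Dinghas type derivative at `p` is a `liminf` along it. -/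
def shrinkingIntervals (I : Set ℝ) (p : ℝ) : Filter (ℝ × ℝ) :=
  ⨅ δ ∈ Ioi (0 : ℝ),
    𝓟 {q : ℝ × ℝ | q.1 ∈ I ∧ q.2 ∈ I ∧ q.1 < q.2 ∧ q.1 ≤ p ∧ p ≤ q.2 ∧ q.2 - q.1 < δ}

lemma hasBasis_shrinkingIntervals (I : Set ℝ) (p : ℝ) :
    (shrinkingIntervals I p).HasBasis (fun δ => 0 < δ) fun δ =>
      {q | q.1 ∈ I ∧ q.2 ∈ I ∧ q.1 < q.2 ∧ q.1 ≤ p ∧ p ≤ q.2 ∧ q.2 - q.1 < δ} := by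
  refine hasBasis_biInf_principal
    (fun δ hδ ε hε => ⟨min δ ε, mem_Ioi.2 (lt_min hδ hε), ?_, ?_⟩) nonempty_Ioi
  · rintro q ⟨hx, hy, hxy, hxp, hpy, hlt⟩
    exact ⟨hx, hy, hxy, hxp, hpy, hlt.trans_le (min_le_left δ ε)⟩
  · rintro q ⟨hx, hy, hxy, hxp, hpy, hlt⟩
    exact ⟨hx, hy, hxy, hxp, hpy, hlt.trans_le (min_le_right δ ε)⟩

variable {n : ℕ} {ω : Fin n → ℝ → ℝ} {ω' f : ℝ → ℝ} {t : Fin n → ℝ} {I : Set ℝ}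

lemma le_dinghasT {c : ℝ} (h : ∀ x ∈ I, ∀ y ∈ I, x < y → c ≤ divDiff ω ω' f (jpts t x y))
    (p : ℝ) : c ≤ dinghasT ω ω' t f I p := by
  refine le_liminf_of_le (by isBoundedDefault) ?_
  refine (hasBasis_shrinkingIntervals I p).eventually_iff.2 ⟨1, one_pos, ?_⟩
  rintro ⟨x, y⟩ ⟨hx, hy, hxy, -⟩
  exact EReal.coe_le_coe_iff.2 (h x hx y hy hxy)

lemma dinghasT_le {c p : ℝ}
    (h : ∃ᶠ q in shrinkingIntervals I p, divDiff ω ω' f (jpts t q.1 q.2) ≤ c) :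
    dinghasT ω ω' t f I p ≤ c :=
  liminf_le_of_frequently_le (h.mono fun _ hq => EReal.coe_le_coe_iff.2 hq) (by isBoundedDefault)

end DinghasDerivative

section ChainInequality

lemma min_div_le_div_of_mul_eq {K : Type*} [Field K] [LinearOrder K] [IsStrictOrderedRing K]
    {p q r a₁ b₁ a₂ b₂ a b : K} (hp : 0 ≤ p) (hq : 0 ≤ q) (hr : 0 < r)
    (hb₁ : 0 < b₁) (hb₂ : 0 < b₂) (hb : 0 < b)
    (ha_eq : r * a = p * a₁ + q * a₂) (hb_eq : r * b = p * b₁ + q * b₂) :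
    min (a₁ / b₁) (a₂ / b₂) ≤ a / b := by
  have h₁ := (le_div_iff₀ hb₁).1 (min_le_left (a₁ / b₁) (a₂ / b₂))
  have h₂ := (le_div_iff₀ hb₂).1 (min_le_right (a₁ / b₁) (a₂ / b₂))
  rw [le_div_iff₀ hb]
  refine le_of_mul_le_mul_left ?_ hr
  linear_combination p * h₁ + q * h₂ + min (a₁ / b₁) (a₂ / b₂) * hb_eq - ha_eq

lemma phi_pair (ω : Fin 2 → ℝ → ℝ) (u v : ℝ) :
    Phi ω ![u, v] = ω 0 u * ω 1 v - ω 0 v * ω 1 u := by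
  simp [Phi, Matrix.det_fin_two]

lemma phi_snoc_triple (ω : Fin 2 → ℝ → ℝ) (g : ℝ → ℝ) (x y z : ℝ) :
    Phi (Fin.snoc ω g : Fin 3 → ℝ → ℝ) ![x, y, z] =
      Phi ω ![x, y] * g z - Phi ω ![x, z] * g y + Phi ω ![y, z] * g x := by
  have h₀ : (Fin.snoc ω g : Fin 3 → ℝ → ℝ) 0 = ω 0 := rfl
  have h₁ : (Fin.snoc ω g : Fin 3 → ℝ → ℝ) 1 = ω 1 := rfl
  have h₂ : (Fin.snoc ω g : Fin 3 → ℝ → ℝ) 2 = g := rfl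
  simp only [Phi, Nat.reduceAdd, Matrix.det_fin_three, Matrix.det_fin_two, Matrix.of_apply,
    Matrix.cons_val, h₀, h₁, h₂]
  ring

-- This and the next identity are three-term Plücker relations. With `ω` a positive Chebyshev
-- system they present a divided difference as a weighted mean of those over the two consecutive
-- triples.
lemma phi_mul_phi_snoc_omit_second (ω : Fin 2 → ℝ → ℝ) (g : ℝ → ℝ) (x₀ x₁ x₂ x₃ : ℝ) :
    Phi ω ![x₁, x₂] * Phi (Fin.snoc ω g : Fin 3 → ℝ → ℝ) ![x₀, x₂, x₃] =
      Phi ω ![x₂, x₃] * Phi (Fin.snoc ω g : Fin 3 → ℝ → ℝ) ![x₀, x₁, x₂] +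
        Phi ω ![x₀, x₂] * Phi (Fin.snoc ω g : Fin 3 → ℝ → ℝ) ![x₁, x₂, x₃] := by
  simp only [phi_snoc_triple, phi_pair]
  ring

lemma phi_mul_phi_snoc_omit_third (ω : Fin 2 → ℝ → ℝ) (g : ℝ → ℝ) (x₀ x₁ x₂ x₃ : ℝ) :
    Phi ω ![x₁, x₂] * Phi (Fin.snoc ω g : Fin 3 → ℝ → ℝ) ![x₀, x₁, x₃] =
      Phi ω ![x₁, x₃] * Phi (Fin.snoc ω g : Fin 3 → ℝ → ℝ) ![x₀, x₁, x₂] +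
        Phi ω ![x₀, x₁] * Phi (Fin.snoc ω g : Fin 3 → ℝ → ℝ) ![x₁, x₂, x₃] := by
  simp only [phi_snoc_triple, phi_pair]
  ring

lemma IsPosChebyshev.phi_pair_pos {ω : Fin 2 → ℝ → ℝ} {I : Set ℝ} (hω : IsPosChebyshev ω I)
    {u v : ℝ} (hu : u ∈ I) (hv : v ∈ I) (huv : u < v) : 0 < Phi ω ![u, v] :=
  hω _ (by simpa [strictMono_vecCons] using huv) (by simp [Fin.forall_fin_two, hu, hv])

lemma IsPosChebyshev.phi_triple_pos {ω : Fin 3 → ℝ → ℝ} {I : Set ℝ} (hω : IsPosChebyshev ω I)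
    {x y z : ℝ} (hx : x ∈ I) (hy : y ∈ I) (hz : z ∈ I) (hxy : x < y) (hyz : y < z) :
    0 < Phi ω ![x, y, z] :=
  hω _ (by simp [strictMono_vecCons, hxy, hyz]) (by simp [Fin.forall_fin_succ, hx, hy, hz])

variable {I : Set ℝ} {ω : Fin 2 → ℝ → ℝ} {ω' : ℝ → ℝ} {x₀ x₁ x₂ x₃ x₄ : ℝ}

lemma min_divDiff_le_omit_second (hω : IsPosChebyshev ω I)
    (hωs : IsPosChebyshev (Fin.snoc ω ω' : Fin 3 → ℝ → ℝ) I) (f : ℝ → ℝ)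
    (h₀ : x₀ ∈ I) (h₁ : x₁ ∈ I) (h₂ : x₂ ∈ I) (h₃ : x₃ ∈ I)
    (h₀₁ : x₀ < x₁) (h₁₂ : x₁ < x₂) (h₂₃ : x₂ < x₃) :
    min (divDiff ω ω' f ![x₀, x₁, x₂]) (divDiff ω ω' f ![x₁, x₂, x₃]) ≤
      divDiff ω ω' f ![x₀, x₂, x₃] :=
  min_div_le_div_of_mul_eq (hω.phi_pair_pos h₂ h₃ h₂₃).le
    (hω.phi_pair_pos h₀ h₂ (h₀₁.trans h₁₂)).le (hω.phi_pair_pos h₁ h₂ h₁₂)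
    (hωs.phi_triple_pos h₀ h₁ h₂ h₀₁ h₁₂) (hωs.phi_triple_pos h₁ h₂ h₃ h₁₂ h₂₃)
    (hωs.phi_triple_pos h₀ h₂ h₃ (h₀₁.trans h₁₂) h₂₃)
    (phi_mul_phi_snoc_omit_second ω f x₀ x₁ x₂ x₃) (phi_mul_phi_snoc_omit_second ω ω' x₀ x₁ x₂ x₃)

lemma min_divDiff_le_omit_third (hω : IsPosChebyshev ω I)
    (hωs : IsPosChebyshev (Fin.snoc ω ω' : Fin 3 → ℝ → ℝ) I) (f : ℝ → ℝ)
    (h₀ : x₀ ∈ I) (h₁ : x₁ ∈ I) (h₂ : x₂ ∈ I) (h₃ : x₃ ∈ I)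
    (h₀₁ : x₀ < x₁) (h₁₂ : x₁ < x₂) (h₂₃ : x₂ < x₃) :
    min (divDiff ω ω' f ![x₀, x₁, x₂]) (divDiff ω ω' f ![x₁, x₂, x₃]) ≤
      divDiff ω ω' f ![x₀, x₁, x₃] :=
  min_div_le_div_of_mul_eq (hω.phi_pair_pos h₁ h₃ (h₁₂.trans h₂₃)).le
    (hω.phi_pair_pos h₀ h₁ h₀₁).le (hω.phi_pair_pos h₁ h₂ h₁₂)
    (hωs.phi_triple_pos h₀ h₁ h₂ h₀₁ h₁₂) (hωs.phi_triple_pos h₁ h₂ h₃ h₁₂ h₂₃)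
    (hωs.phi_triple_pos h₀ h₁ h₃ h₀₁ (h₁₂.trans h₂₃))
    (phi_mul_phi_snoc_omit_third ω f x₀ x₁ x₂ x₃) (phi_mul_phi_snoc_omit_third ω ω' x₀ x₁ x₂ x₃)

lemma min_divDiff_consecutive_le (hω : IsPosChebyshev ω I)
    (hωs : IsPosChebyshev (Fin.snoc ω ω' : Fin 3 → ℝ → ℝ) I) (f : ℝ → ℝ)
    (h₀ : x₀ ∈ I) (h₁ : x₁ ∈ I) (h₂ : x₂ ∈ I) (h₃ : x₃ ∈ I) (h₄ : x₄ ∈ I)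
    (h₀₁ : x₀ < x₁) (h₁₂ : x₁ < x₂) (h₂₃ : x₂ < x₃) (h₃₄ : x₃ < x₄) :
    min (min (divDiff ω ω' f ![x₀, x₁, x₂]) (divDiff ω ω' f ![x₁, x₂, x₃]))
        (divDiff ω ω' f ![x₂, x₃, x₄]) ≤
      divDiff ω ω' f ![x₀, x₂, x₄] :=
  (min_le_min_right _ (min_divDiff_le_omit_second hω hωs f h₀ h₁ h₂ h₃ h₀₁ h₁₂ h₂₃)).trans
    (min_divDiff_le_omit_third hω hωs f h₀ h₂ h₃ h₄ (h₀₁.trans h₁₂) h₂₃ h₃₄)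

end ChainInequality

section MeanValueInequality

lemma exists_mem_Icc_forall_exists_short {P : ℝ × ℝ → Prop} {r : ℝ} (hr₀ : 0 ≤ r) (hr₁ : r < 1)
    (hle : ∀ q, P q → q.1 ≤ q.2)
    (hstep : ∀ q, P q → ∃ q', P q' ∧ Icc q'.1 q'.2 ⊆ Icc q.1 q.2 ∧ q'.2 - q'.1 ≤ r * (q.2 - q.1))
    {q : ℝ × ℝ} (hq : P q) :
    ∃ p ∈ Icc q.1 q.2, ∀ δ > 0, ∃ q', P q' ∧ p ∈ Icc q'.1 q'.2 ∧ q'.2 - q'.1 < δ := by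
  choose! next hnext hsub hlen using hstep
  let s : ℕ → ℝ × ℝ := fun n => next^[n] q
  have s_succ (n : ℕ) : s (n + 1) = next (s n) := Function.iterate_succ_apply' next n q
  have hs (n : ℕ) : P (s n) := by
    induction n with
    | zero => exact hq
    | succ n ih => exact s_succ n ▸ hnext _ ih
  have hanti : Antitone fun n => Icc (s n).1 (s n).2 :=
    antitone_nat_of_succ_le fun n => s_succ n ▸ hsub _ (hs n)
  have hgeom (n : ℕ) : (s n).2 - (s n).1 ≤ r ^ n * (q.2 - q.1) :=
    le_geom (u := fun n => (s n).2 - (s n).1) hr₀ n fun k _ => s_succ k ▸ hlen _ (hs k)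
  have hmem (n : ℕ) : ⨆ k, (s k).1 ∈ Icc (s n).1 (s n).2 :=
    mem_iInter.1 (ciSup_mem_iInter_Icc_of_antitone_Icc hanti fun n => hle _ (hs n)) n
  refine ⟨⨆ k, (s k).1, hmem 0, fun δ hδ => ?_⟩
  have hlim : Tendsto (fun n => r ^ n * (q.2 - q.1)) atTop (nhds 0) := by
    simpa using (tendsto_pow_atTop_nhds_zero_of_lt_one hr₀ hr₁).mul_const (q.2 - q.1)
  obtain ⟨n, hn⟩ := (hlim.eventually_lt_const hδ).exists
  exact ⟨s n, hs n, hmem n, (hgeom n).trans_lt hn⟩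

lemma jpts_pair_s16 {a b : ℝ} (hab : a + b ≠ 0) (x y : ℝ) :
    jpts ![a, b] x y = ![x, (b * x + a * y) / (a + b), y] := by
  have hlast : psum ![a, b] (Fin.last 2) = a + b := by rw [psum_last, Fin.sum_univ_two]; rfl
  have hone : psum ![a, b] 1 = a := by simp [psum, Finset.sum_filter]
  ext j
  fin_cases j
  · exact jpts_zero (hlast ▸ hab) x y
  · change jpts ![a, b] x y 1 = (b * x + a * y) / (a + b)
    rw [jpts, hlast, hone, add_sub_cancel_left]
  · exact jpts_last (hlast ▸ hab) x y

lemma lt_weighted_mean {K : Type*} [Field K] [LinearOrder K] [IsStrictOrderedRing K]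
    {a b x y : K} (ha : 0 < a) (hb : 0 < b) (hxy : x < y) :
    x < (b * x + a * y) / (a + b) := by
  rw [lt_div_iff₀ (add_pos ha hb)]
  linear_combination a * hxy

lemma weighted_mean_lt {K : Type*} [Field K] [LinearOrder K] [IsStrictOrderedRing K]
    {a b x y : K} (ha : 0 < a) (hb : 0 < b) (hxy : x < y) :
    (b * x + a * y) / (a + b) < y := by
  rw [div_lt_iff₀ (add_pos ha hb)]
  linear_combination b * hxy

/-- The smaller of the two divided differences of `f` on `[x, y]` whose middle node splits the
interval in the ratio `a : b` or `b : a`. It is the quantity that the nested-interval argument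
keeps from increasing. -/
noncomputable def minDivDiff (ω : Fin 2 → ℝ → ℝ) (ω' f : ℝ → ℝ) (a b x y : ℝ) : ℝ :=
  min (divDiff ω ω' f (jpts ![a, b] x y)) (divDiff ω ω' f (jpts ![b, a] x y))

lemma minDivDiff_comm (ω : Fin 2 → ℝ → ℝ) (ω' f : ℝ → ℝ) (a b x y : ℝ) :
    minDivDiff ω ω' f a b x y = minDivDiff ω ω' f b a x y :=
  min_comm _ _

variable {I : Set ℝ} {ω : Fin 2 → ℝ → ℝ} {ω' : ℝ → ℝ} {a b x y : ℝ}

lemma exists_self_similar_chain (ha : 0 < a) (hb : 0 < b) (hxy : x < y) :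
    ∃ u m v, (x < u ∧ u < m ∧ m < v ∧ v < y) ∧
      (jpts ![a, b] x y = ![x, m, y] ∧ jpts ![b, a] x m = ![x, u, m] ∧
        jpts ![a, b] u v = ![u, m, v] ∧ jpts ![a, b] m y = ![m, v, y]) ∧
      m - x = a / (a + b) * (y - x) ∧ v - u = a / (a + b) * (y - x) ∧
      y - m = b / (a + b) * (y - x) := by
  have hab : a + b ≠ 0 := (add_pos ha hb).ne'
  let m := (b * x + a * y) / (a + b)
  let u := (a * x + b * m) / (b + a)
  let v := (b * m + a * y) / (a + b)
  have hxm : x < m := lt_weighted_mean ha hb hxy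
  have hmy : m < y := weighted_mean_lt ha hb hxy
  have hm : (b * u + a * v) / (a + b) = m := by
    simp only [u, v, m]
    field_simp
    ring
  refine ⟨u, m, v, ⟨lt_weighted_mean hb ha hxm, weighted_mean_lt hb ha hxm,
    lt_weighted_mean ha hb hmy, weighted_mean_lt ha hb hmy⟩, ⟨jpts_pair_s16 hab x y,
    jpts_pair_s16 (add_comm a b ▸ hab) x m, hm ▸ jpts_pair_s16 hab u v, jpts_pair_s16 hab m y⟩, ?_, ?_, ?_⟩ <;>
  · simp only [u, v, m]
    field_simp
    ring

lemma exists_subinterval_minDivDiff_le_divDiff (hI : I.OrdConnected) (hω : IsPosChebyshev ω I)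
    (hωs : IsPosChebyshev (Fin.snoc ω ω' : Fin 3 → ℝ → ℝ) I) (ha : 0 < a) (hb : 0 < b)
    (f : ℝ → ℝ) (hx : x ∈ I) (hy : y ∈ I) (hxy : x < y) :
    ∃ x' y', x' < y' ∧ Icc x' y' ⊆ Icc x y ∧ y' - x' ≤ max a b / (a + b) * (y - x) ∧
      minDivDiff ω ω' f a b x' y' ≤ divDiff ω ω' f (jpts ![a, b] x y) := by
  have hr (c : ℝ) (hc : c ≤ max a b) : c / (a + b) * (y - x) ≤ max a b / (a + b) * (y - x) :=
    mul_le_mul_of_nonneg_right (div_le_div_of_nonneg_right hc (add_pos ha hb).le)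
      (sub_nonneg.2 hxy.le)
  obtain ⟨u, m, v, ⟨hxu, hum, hmv, hvy⟩, ⟨hwhole, hleft, hmiddle, hright⟩, hmx, hvu, hym⟩ :=
    exists_self_similar_chain ha hb hxy
  have hxm : x < m := hxu.trans hum
  have hmy : m < y := hmv.trans hvy
  have hIcc : Icc x y ⊆ I := hI.out hx hy
  have hchain := min_divDiff_consecutive_le hω hωs f hx (hIcc ⟨hxu.le, (hum.trans hmy).le⟩)
    (hIcc ⟨hxm.le, hmy.le⟩) (hIcc ⟨(hxm.trans hmv).le, hvy.le⟩) hy hxu hum hmv hvy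
  rw [← hwhole, ← hleft, ← hmiddle, ← hright, min_le_iff, min_le_iff] at hchain
  rcases hchain with (h | h) | h
  · exact ⟨x, m, hxm, Icc_subset_Icc_right hmy.le, hmx.trans_le (hr a (le_max_left a b)),
      (min_le_right _ _).trans h⟩
  · exact ⟨u, v, hum.trans hmv, Icc_subset_Icc hxu.le hvy.le,
      hvu.trans_le (hr a (le_max_left a b)), (min_le_left _ _).trans h⟩
  · exact ⟨m, y, hmy, Icc_subset_Icc_left hxm.le, hym.trans_le (hr b (le_max_right a b)),
      (min_le_left _ _).trans h⟩

lemma exists_subinterval_minDivDiff_le (hI : I.OrdConnected) (hω : IsPosChebyshev ω I)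
    (hωs : IsPosChebyshev (Fin.snoc ω ω' : Fin 3 → ℝ → ℝ) I) (ha : 0 < a) (hb : 0 < b)
    (f : ℝ → ℝ) (hx : x ∈ I) (hy : y ∈ I) (hxy : x < y) :
    ∃ x' y', x' < y' ∧ Icc x' y' ⊆ Icc x y ∧ y' - x' ≤ max a b / (a + b) * (y - x) ∧
      minDivDiff ω ω' f a b x' y' ≤ minDivDiff ω ω' f a b x y := by
  rcases min_choice (divDiff ω ω' f (jpts ![a, b] x y)) (divDiff ω ω' f (jpts ![b, a] x y))
    with h | h <;> rw [minDivDiff.eq_def ω ω' f a b x y, h]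
  · exact exists_subinterval_minDivDiff_le_divDiff hI hω hωs ha hb f hx hy hxy
  · simp_rw [minDivDiff_comm ω ω' f a b, max_comm a b, add_comm a b]
    exact exists_subinterval_minDivDiff_le_divDiff hI hω hωs hb ha f hx hy hxy

theorem exists_min_dinghasT_le_minDivDiff (hI : I.OrdConnected) (hω : IsPosChebyshev ω I)
    (hωs : IsPosChebyshev (Fin.snoc ω ω' : Fin 3 → ℝ → ℝ) I) (ha : 0 < a) (hb : 0 < b)
    (f : ℝ → ℝ) (hx : x ∈ I) (hy : y ∈ I) (hxy : x < y) :
    ∃ p ∈ Icc x y, min (dinghasT ω ω' ![a, b] f I p) (dinghasT ω ω' ![b, a] f I p) ≤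
      minDivDiff ω ω' f a b x y := by
  have hr₁ : max a b / (a + b) < 1 := by
    rw [div_lt_one (add_pos ha hb)]
    exact max_lt (lt_add_of_pos_right a hb) (lt_add_of_pos_left b ha)
  let P (q : ℝ × ℝ) : Prop :=
    q.1 ∈ I ∧ q.2 ∈ I ∧ q.1 < q.2 ∧ minDivDiff ω ω' f a b q.1 q.2 ≤ minDivDiff ω ω' f a b x y
  have hstep (q : ℝ × ℝ) (hq : P q) : ∃ q', P q' ∧ Icc q'.1 q'.2 ⊆ Icc q.1 q.2 ∧
      q'.2 - q'.1 ≤ max a b / (a + b) * (q.2 - q.1) := by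
    obtain ⟨hq₁, hq₂, hlt, hle⟩ := hq
    obtain ⟨x', y', hlt', hsub, hlen, hle'⟩ :=
      exists_subinterval_minDivDiff_le hI hω hωs ha hb f hq₁ hq₂ hlt
    have hsubI := hsub.trans (hI.out hq₁ hq₂)
    exact ⟨(x', y'), ⟨hsubI (left_mem_Icc.2 hlt'.le), hsubI (right_mem_Icc.2 hlt'.le), hlt',
      hle'.trans hle⟩, hsub, hlen⟩
  obtain ⟨p, hp, hshort⟩ := exists_mem_Icc_forall_exists_short (P := P) (q := (x, y))
    (by positivity) hr₁ (fun q hq => hq.2.2.1.le) hstep ⟨hx, hy, hxy, le_rfl⟩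
  have hfreq : ∃ᶠ q in shrinkingIntervals I p,
      minDivDiff ω ω' f a b q.1 q.2 ≤ minDivDiff ω ω' f a b x y := by
    refine (hasBasis_shrinkingIntervals I p).frequently_iff.2 fun δ hδ => ?_
    obtain ⟨q, ⟨hq₁, hq₂, hlt, hle⟩, hpq, hlen⟩ := hshort δ hδ
    exact ⟨q, ⟨hq₁, hq₂, hlt, hpq.1, hpq.2, hlen⟩, hle⟩
  refine ⟨p, hp, ?_⟩
  simp_rw [minDivDiff.eq_def ω ω' f a b (Prod.fst _), min_le_iff, frequently_or_distrib] at hfreq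
  exact min_le_iff.2 (hfreq.imp dinghasT_le dinghasT_le)

end MeanValueInequality

/-- **Corollary 10.** For `n = 2` and positive `t₁, t₂`, the function `f` is
symmetrically `((t₁,t₂),ω)`-convex on `I` (i.e. both `((t₁,t₂),ω)`- and
`((t₂,t₁),ω)`-convex) if and only if both lower Dinghas type derivatives
`D̲_{((t₁,t₂),ω*)} f(p)` and `D̲_{((t₂,t₁),ω*)} f(p)` are nonnegative at every
`p ∈ I`. -/
theorem symmetrically_tOmegaConvexOn_iff_dinghasT_nonneg
    (I : Set ℝ) (hI : I.OrdConnected) (hne : ∃ a ∈ I, ∃ b ∈ I, a < b)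
    (ω : Fin 2 → ℝ → ℝ) (ω' : ℝ → ℝ)
    (hω : IsPosChebyshev ω I) (hωs : IsPosChebyshev (Fin.snoc ω ω') I)
    (t₁ t₂ : ℝ) (ht₁ : 0 < t₁) (ht₂ : 0 < t₂) (f : ℝ → ℝ) :
    (TOmegaConvexOn ω ![t₁, t₂] I f ∧ TOmegaConvexOn ω ![t₂, t₁] I f) ↔
      ∀ p ∈ I, 0 ≤ dinghasT ω ω' ![t₁, t₂] f I p ∧
        0 ≤ dinghasT ω ω' ![t₂, t₁] f I p := by
  have ht : ∀ i, 0 < ![t₁, t₂] i := Fin.forall_fin_two.2 ⟨ht₁, ht₂⟩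
  have ht' : ∀ i, 0 < ![t₂, t₁] i := Fin.forall_fin_two.2 ⟨ht₂, ht₁⟩
  rw [tOmegaConvexOn_iff_divDiff_jpts_nonneg hI hωs ht,
    tOmegaConvexOn_iff_divDiff_jpts_nonneg hI hωs ht']
  constructor
  · rintro ⟨hf, hf'⟩ p -
    exact ⟨le_dinghasT hf p, le_dinghasT hf' p⟩
  · intro hf
    have hmin : ∀ x ∈ I, ∀ y ∈ I, x < y → 0 ≤ minDivDiff ω ω' f t₁ t₂ x y := by
      intro x hx y hy hxy
      obtain ⟨p, hp, hle⟩ := exists_min_dinghasT_le_minDivDiff hI hω hωs ht₁ ht₂ f hx hy hxy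
      have hpI : p ∈ I := hI.out hx hy hp
      exact EReal.coe_nonneg.1 ((le_min (hf p hpI).1 (hf p hpI).2).trans hle)
    exact ⟨fun x hx y hy hxy => (le_min_iff.1 (hmin x hx y hy hxy)).1,
      fun x hx y hy hxy => (le_min_iff.1 (hmin x hx y hy hxy)).2⟩
end
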